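/- Let f be a long knot and let D be any diagram of f, possibly with transverse triple or higher multiple crossings, such that the subarcs of f near each multiple crossing are straight segments parallel to the plane N^⊥. Then for all sufficiently small ε > 0, I_X(f) = ⟨X, G_D⟩ + (1/2)·(⟨X′₁, G_D⟩ + ⟨X′₂, G_D⟩ + ⟨X′₃, G_D⟩) and I_Y(f) = 0. -/

import Mathlib

open MeasureTheory Filter Topology Set

noncomputable section

abbrev E2 : Type := EuclideanSpace ℝ (Fin 2)
abbrev E3 : Type := EuclideanSpace ℝ (Fin 3)
abbrev E4 : Type := EuclideanSpace ℝ (Fin 4)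
abbrev E6 : Type := EuclideanSpace ℝ (Fin 6)

/-- The point of `ℝ³` with the given coordinates. -/
def mk3 (x y z : ℝ) : E3 := (WithLp.equiv 2 (Fin 3 → ℝ)).symm ![x, y, z]

/-- The north pole `N = (0,0,1)` of `S² ⊆ ℝ³`. -/
def NP : E3 := mk3 0 0 1

/-- Projection of `ℝ³` onto the plane `N^⊥` (the first two coordinates). -/
def pr12 (v : E3) : ℝ × ℝ := (v 0, v 1)

/-- The `N`-coordinate. -/
def pr3 (v : E3) : ℝ := v 2

/-- `unitv v = v / ‖v‖`. -/
def unitv (v : E3) : E3 := ‖v‖⁻¹ • v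

/-- Determinant of the projections to `N^⊥` of two vectors (first vector, then second). -/
def cross2 (a b : E3) : ℝ := a 0 * b 1 - a 1 * b 0

/-- 3×3 determinant (scalar triple product); for `p ∈ S²` and `v, w` tangent to `S²` at
`p`, this is the value of the standard area form of `S²` at `p` on `(v, w)`. -/
def det3 (p v w : E3) : ℝ :=
  p 0 * (v 1 * w 2 - v 2 * w 1) - p 1 * (v 0 * w 2 - v 2 * w 0) +
    p 2 * (v 0 * w 1 - v 1 * w 0)

/-! ### Long knots and 3-component long links -/

/-- A long knot: a smooth embedding `ℝ ↪ ℝ³` which is standard outside `[-1,1]`. -/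
def IsLongKnot (f : ℝ → E3) : Prop :=
  ContDiff ℝ (⊤ : ℕ∞) f ∧ Function.Injective f ∧ (∀ t, deriv f t ≠ 0) ∧
    ∀ x : ℝ, 1 ≤ |x| → f x = mk3 x 0 0

/-- Smooth isotopy of long knots. -/
def KnotIsotopic (f₀ f₁ : ℝ → E3) : Prop :=
  ∃ H : ℝ → ℝ → E3,
    ContDiff ℝ (⊤ : ℕ∞) (fun p : ℝ × ℝ => H p.1 p.2) ∧
    (∀ s, IsLongKnot (H s)) ∧ H 0 = f₀ ∧ H 1 = f₁

/-- A 3-component long link: a smooth embedding `ℝ ⊔ ℝ ⊔ ℝ ↪ ℝ³`, standard outside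
`[-1,1]`, component `k` (for `k = 1,2,3`, i.e. index `i = k - 1 : Fin 3`) having ends
`x ↦ (x, (2 - k)|x|, 0)`. -/
def IsLongLink3 (f : Fin 3 → ℝ → E3) : Prop :=
  (∀ i, ContDiff ℝ (⊤ : ℕ∞) (f i)) ∧
  (∀ i j s t, f i s = f j t → i = j ∧ s = t) ∧
  (∀ i t, deriv (f i) t ≠ 0) ∧
  ∀ i (x : ℝ), 1 ≤ |x| → f i x = mk3 x ((1 - ((i : ℕ) : ℝ)) * |x|) 0

/-- Smooth isotopy of 3-component long links. -/
def LinkIsotopic (f₀ f₁ : Fin 3 → ℝ → E3) : Prop :=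
  ∃ H : ℝ → Fin 3 → ℝ → E3,
    (∀ i, ContDiff ℝ (⊤ : ℕ∞) (fun p : ℝ × ℝ => H p.1 i p.2)) ∧
    (∀ s, IsLongLink3 (H s)) ∧ H 0 = f₀ ∧ H 1 = f₁

/-! ### Diagrams, crossings and Gauss diagram pairings -/

/-- All self-intersections of the projection of the long knot `f` are transverse
(any two branches meeting at a multiple point have independent projected tangents). -/
def TransverseK (f : ℝ → E3) : Prop :=
  ∀ t u, t ≠ u → pr12 (f t) = pr12 (f u) → cross2 (deriv f t) (deriv f u) ≠ 0

/-- The diagram of `f` has only transverse double points. -/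
def OnlyDoubleK (f : ℝ → E3) : Prop :=
  TransverseK f ∧
  ∀ t u v : ℝ, t ≠ u → u ≠ v → t ≠ v →
    pr12 (f t) = pr12 (f u) → pr12 (f u) = pr12 (f v) → False

/-- All self-intersections of the projection of the long link `f` are transverse. -/
def TransverseL (f : Fin 3 → ℝ → E3) : Prop :=
  ∀ i j s t, (i, s) ≠ (j, t) → pr12 (f i s) = pr12 (f j t) →
    cross2 (deriv (f i) s) (deriv (f j) t) ≠ 0

/-- The diagram of the long link `f` has only transverse double points. -/
def OnlyDoubleL (f : Fin 3 → ℝ → E3) : Prop :=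
  TransverseL f ∧
  ∀ i j k s t u, (i, s) ≠ (j, t) → (j, t) ≠ (k, u) → (i, s) ≠ (k, u) →
    pr12 (f i s) = pr12 (f j t) → pr12 (f j t) = pr12 (f k u) → False

/-- Crossings of a long knot diagram: pairs `(t, u)` with `t` on the lower and `u` on the
upper strand; the corresponding chord of the Gauss diagram is directed from `t` to `u`. -/
def CrossingK (f : ℝ → E3) : Set (ℝ × ℝ) :=
  {p | p.1 ≠ p.2 ∧ pr12 (f p.1) = pr12 (f p.2) ∧ pr3 (f p.1) < pr3 (f p.2)}

/-- The sign of the crossing `p = (t, u)` (`+1` iff the projected tangent of the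
over-strand followed by that of the under-strand is a positive basis of `N^⊥`). -/
def csignK (f : ℝ → E3) (p : ℝ × ℝ) : ℝ :=
  Real.sign (cross2 (deriv f p.2) (deriv f p.1))

/-- Gauss diagram pairing for a long knot: the sum, over all pairs of chords of the Gauss
diagram of `f` in the relative position prescribed by `R`, of the products of signs. -/
def pairK (f : ℝ → E3) (R : ℝ × ℝ → ℝ × ℝ → Prop) : ℝ :=
  ∑ᶠ q ∈ {q : (ℝ × ℝ) × (ℝ × ℝ) | q.1 ∈ CrossingK f ∧ q.2 ∈ CrossingK f ∧ R q.1 q.2},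
    csignK f q.1 * csignK f q.2

/-- `⟨X, G_D⟩` : chords `x₁ → x₃` and `x₄ → x₂` with `x₁ < x₂ < x₃ < x₄`. -/
def pairXK (f : ℝ → E3) : ℝ :=
  pairK f fun p q => p.1 < q.2 ∧ q.2 < p.2 ∧ p.2 < q.1

/-- `⟨X′₁, G_D⟩` : chords `a → b` and `c → a` with `a < b < c`. -/
def pairX1K (f : ℝ → E3) : ℝ :=
  pairK f fun p q => q.2 = p.1 ∧ p.1 < p.2 ∧ p.2 < q.1

/-- `⟨X′₂, G_D⟩` : chords `a → b` and `c → b` with `a < b < c`. -/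
def pairX2K (f : ℝ → E3) : ℝ :=
  pairK f fun p q => q.2 = p.2 ∧ p.1 < p.2 ∧ p.2 < q.1

/-- `⟨X′₃, G_D⟩` : chords `a → c` and `c → b` with `a < b < c`. -/
def pairX3K (f : ℝ → E3) : ℝ :=
  pairK f fun p q => p.2 = q.1 ∧ p.1 < q.2 ∧ q.2 < p.2

/-- Crossings of a 3-strand diagram between strand `i` (under) and strand `j` (over);
the corresponding chord is directed from `p.1` on strand `i` to `p.2` on strand `j`. -/
def CrossingL (f : Fin 3 → ℝ → E3) (i j : Fin 3) : Set (ℝ × ℝ) :=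
  {p | pr12 (f i p.1) = pr12 (f j p.2) ∧ pr3 (f i p.1) < pr3 (f j p.2)}

/-- The sign of the crossing `p` between strand `i` (under) and strand `j` (over). -/
def csignL (f : Fin 3 → ℝ → E3) (i j : Fin 3) (p : ℝ × ℝ) : ℝ :=
  Real.sign (cross2 (deriv (f j) p.2) (deriv (f i) p.1))

/-- Gauss diagram pairing for a 3-component long link. -/
def pairL (f : Fin 3 → ℝ → E3) (i₁ j₁ i₂ j₂ : Fin 3) (R : ℝ × ℝ → ℝ × ℝ → Prop) : ℝ :=
  ∑ᶠ q ∈ {q : (ℝ × ℝ) × (ℝ × ℝ) |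
      q.1 ∈ CrossingL f i₁ j₁ ∧ q.2 ∈ CrossingL f i₂ j₂ ∧ R q.1 q.2},
    csignL f i₁ j₁ q.1 * csignL f i₂ j₂ q.2

/-- `⟨𝒳₁, G_D⟩` : a chord from `t` on strand 1 to strand 2, and a chord from strand 3 to
`t′` on strand 1, with `t < t′`. -/
def pairL1 (f : Fin 3 → ℝ → E3) : ℝ := pairL f 0 1 2 0 fun p q => p.1 < q.2

/-- `⟨𝒳₂, G_D⟩` : a chord from strand 1 to `u` on strand 2, and a chord from strand 3 to
`u′` on strand 2, with `u < u′`. -/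
def pairL2 (f : Fin 3 → ℝ → E3) : ℝ := pairL f 0 1 2 1 fun p q => p.2 < q.2

/-- `⟨𝒳₃, G_D⟩` : a chord from strand 1 to `v` on strand 3, and a chord from `v′` on
strand 3 to strand 2, with `v < v′`. -/
def pairL3 (f : Fin 3 → ℝ → E3) : ℝ := pairL f 0 2 2 1 fun p q => p.2 < q.1

/-- `⟨𝒳′₁, G_D⟩` : as `𝒳₁` but with `t = t′` (a triple point). -/
def pairL1' (f : Fin 3 → ℝ → E3) : ℝ := pairL f 0 1 2 0 fun p q => p.1 = q.2

/-- `⟨𝒳′₂, G_D⟩` : as `𝒳₂` but with `u = u′` (a triple point). -/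
def pairL2' (f : Fin 3 → ℝ → E3) : ℝ := pairL f 0 1 2 1 fun p q => p.2 = q.2

/-- `⟨𝒳′₃, G_D⟩` : as `𝒳₃` but with `v = v′` (a triple point). -/
def pairL3' (f : Fin 3 → ℝ → E3) : ℝ := pairL f 0 2 2 1 fun p q => p.2 = q.1

/-! ### The localized unit 2-form `η` on `S²` -/

/-- The action of a 2×2 matrix on `ℝ³ = ℝ² × ℝ`, acting on the first two coordinates. -/
def act2 (A : Matrix (Fin 2) (Fin 2) ℝ) (v : E3) : E3 :=
  mk3 (A 0 0 * v 0 + A 0 1 * v 1) (A 1 0 * v 0 + A 1 1 * v 1) (v 2)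

/-- `IsEtaForm ε g` says that `η = g · (standard area form of S²)` is a smooth 2-form on
`S²` such that: (i) `supp η` lies in the `ε`-neighbourhood of the north pole `N`;
(ii) `φ*η = det φ · η` for every `φ ∈ O(2) ⊆ O(3)` (since `φ* (area form) = det φ ·
(area form)`, this amounts to `g ∘ φ = g`); (iii) `∫_{S²} η = 1`, i.e. the integral of
`g` against the surface measure of `S²` is `1`. -/
def IsEtaForm (ε : ℝ) (g : E3 → ℝ) : Prop :=
  ContDiff ℝ (⊤ : ℕ∞) g ∧
  (∀ v : E3, ‖v‖ = 1 → g v ≠ 0 → ‖v - NP‖ < ε) ∧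
  (∀ A : Matrix (Fin 2) (Fin 2) ℝ, A * A.transpose = 1 →
    ∀ v : E3, ‖v‖ = 1 → g (act2 A v) = g v) ∧
  ∫ v : Metric.sphere (0 : E3) 1, g v ∂((volume : Measure E3).toSphere) = 1

/-! ### Configuration space integrals -/

/-- `i`-th partial derivative of a map `ℝⁿ → ℝ³`. -/
def pdv {n : ℕ} (h : EuclideanSpace ℝ (Fin n) → E3) (i : Fin n)
    (x : EuclideanSpace ℝ (Fin n)) : E3 :=
  fderiv ℝ h x (EuclideanSpace.single i 1)

/-- The pullback `h*η` (for `η = g · (area form)`) evaluated at the point `x` on the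
coordinate vectors `(e_i, e_j)`. -/
def form2 {n : ℕ} (g : E3 → ℝ) (h : EuclideanSpace ℝ (Fin n) → E3)
    (x : EuclideanSpace ℝ (Fin n)) (i j : Fin n) : ℝ :=
  g (h x) * det3 (h x) (pdv h i x) (pdv h j x)

/-- `(h*η ∧ k*η)(e₀, e₁, e₂, e₃)` at `x`. -/
def wedge22 (g : E3 → ℝ) (h k : E4 → E3) (x : E4) : ℝ :=
  (1 / 4) * ∑ σ : Equiv.Perm (Fin 4),
    ((Equiv.Perm.sign σ : ℤ) : ℝ) * form2 g h x (σ 0) (σ 1) * form2 g k x (σ 2) (σ 3)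

/-- `(h*η ∧ k*η ∧ l*η)(e₀, …, e₅)` at `x`. -/
def wedge222 (g : E3 → ℝ) (h k l : E6 → E3) (x : E6) : ℝ :=
  (1 / 8) * ∑ σ : Equiv.Perm (Fin 6),
    ((Equiv.Perm.sign σ : ℤ) : ℝ) * form2 g h x (σ 0) (σ 1) * form2 g k x (σ 2) (σ 3) *
      form2 g l x (σ 4) (σ 5)

/-- The configuration space `C_X = {x₁ < x₂ < x₃ < x₄}`. -/
def CX : Set E4 := {x | x 0 < x 1 ∧ x 1 < x 2 ∧ x 2 < x 3}

/-- The integrand `ω_X = h₁₃*η ∧ h₄₂*η` for a long knot. -/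
def omegaX (f : ℝ → E3) (g : E3 → ℝ) : E4 → ℝ :=
  wedge22 g (fun x => unitv (f (x 2) - f (x 0))) (fun x => unitv (f (x 1) - f (x 3)))

/-- The configuration space integral `I_X(f)` of a long knot. -/
def IX (f : ℝ → E3) (g : E3 → ℝ) : ℝ := ∫ x in CX, omegaX f g x

/-- The free point `x₄ ∈ ℝ³` in a `Y`-configuration `(x₁,x₂,x₃;x₄) ∈ ℝ³ × ℝ³ = ℝ⁶`. -/
def ptY (x : E6) : E3 := mk3 (x 3) (x 4) (x 5)

/-- The configuration space `C_Y(f)` for a long knot. -/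
def CY (f : ℝ → E3) : Set E6 :=
  {x | x 0 < x 1 ∧ x 1 < x 2 ∧ ptY x ≠ f (x 0) ∧ ptY x ≠ f (x 1) ∧ ptY x ≠ f (x 2)}

/-- The integrand `ω_Y = h₁₄*η ∧ h₄₂*η ∧ h₃₄*η` for a long knot. -/
def omegaY (f : ℝ → E3) (g : E3 → ℝ) : E6 → ℝ :=
  wedge222 g (fun x => unitv (ptY x - f (x 0))) (fun x => unitv (f (x 1) - ptY x))
    (fun x => unitv (ptY x - f (x 2)))

/-- The configuration space integral `I_Y(f)` of a long knot. -/
def IY (f : ℝ → E3) (g : E3 → ℝ) : ℝ := ∫ x in CY f, omegaY f g x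

def CL1 : Set E4 := {x | x 0 < x 1}
def CL2 : Set E4 := {x | x 1 < x 2}
def CL3 : Set E4 := {x | x 2 < x 3}

/-- The integrand of `I_{𝒳₁}(f)` for a 3-component long link. -/
def omegaL1 (f : Fin 3 → ℝ → E3) (g : E3 → ℝ) : E4 → ℝ :=
  wedge22 g (fun x => unitv (f 1 (x 2) - f 0 (x 0))) (fun x => unitv (f 2 (x 3) - f 0 (x 1)))

/-- The integrand of `I_{𝒳₂}(f)` for a 3-component long link. -/
def omegaL2 (f : Fin 3 → ℝ → E3) (g : E3 → ℝ) : E4 → ℝ :=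
  wedge22 g (fun x => unitv (f 1 (x 1) - f 0 (x 0))) (fun x => unitv (f 1 (x 2) - f 2 (x 3)))

/-- The integrand of `I_{𝒳₃}(f)` for a 3-component long link. -/
def omegaL3 (f : Fin 3 → ℝ → E3) (g : E3 → ℝ) : E4 → ℝ :=
  wedge22 g (fun x => unitv (f 2 (x 2) - f 0 (x 0))) (fun x => unitv (f 1 (x 1) - f 2 (x 3)))

/-- The configuration space integral `I_{𝒳₁}(f)`. -/
def IL1 (f : Fin 3 → ℝ → E3) (g : E3 → ℝ) : ℝ := ∫ x in CL1, omegaL1 f g x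

/-- The configuration space integral `I_{𝒳₂}(f)`. -/
def IL2 (f : Fin 3 → ℝ → E3) (g : E3 → ℝ) : ℝ := ∫ x in CL2, omegaL2 f g x

/-- The configuration space integral `I_{𝒳₃}(f)`. -/
def IL3 (f : Fin 3 → ℝ → E3) (g : E3 → ℝ) : ℝ := ∫ x in CL3, omegaL3 f g x

/-- The configuration space `C_𝒴(f)` for a 3-component long link. -/
def CYL (f : Fin 3 → ℝ → E3) : Set E6 :=
  {x | ptY x ≠ f 0 (x 0) ∧ ptY x ≠ f 1 (x 1) ∧ ptY x ≠ f 2 (x 2)}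

/-- The integrand `ω_𝒴 = h₁₄*η ∧ h₄₂*η ∧ h₃₄*η` for a 3-component long link. -/
def omegaYL (f : Fin 3 → ℝ → E3) (g : E3 → ℝ) : E6 → ℝ :=
  wedge222 g (fun x => unitv (ptY x - f 0 (x 0))) (fun x => unitv (f 1 (x 1) - ptY x))
    (fun x => unitv (ptY x - f 2 (x 2)))

/-- The configuration space integral `I_𝒴(f)`. -/
def ILY (f : Fin 3 → ℝ → E3) (g : E3 → ℝ) : ℝ := ∫ x in CYL f, omegaYL f g x

/-! ### Model triple points -/

/-- The affine parametrization `t ↦ a + t • v` of a straight segment. -/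
def seg (a v : E3) (t : ℝ) : E3 := a + t • v

/-- A model triple point: three straight segments `S₁, S₂, S₃` (indexed by `0, 1, 2`),
`S_k` parametrized by `seg (a k) (v k) : (-δ, δ) → ℝ³`, all parallel to the plane
`N^⊥`, whose projections to `N^⊥` meet pairwise transversely at the single common point
which is the projection of each midpoint `a k`, and with `S₂` higher than `S₁`, `S₃`. -/
def IsModelTriple (a v : Fin 3 → E3) : Prop :=
  (∀ k, v k 2 = 0) ∧ (∀ k, v k ≠ 0) ∧
  pr12 (a 0) = pr12 (a 1) ∧ pr12 (a 1) = pr12 (a 2) ∧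
  (∀ j k, j ≠ k → cross2 (v j) (v k) ≠ 0) ∧
  a 0 2 < a 1 2 ∧ a 2 2 < a 1 2

/-- A model triple point of type `(←, s₁, s₂, s₃)`: `S₁` passes over `S₃`, and the signs
of the crossings `S₁–S₃`, `S₁–S₂`, `S₂–S₃` are `s₁, s₂, s₃` respectively. -/
def ModelLeft (a v : Fin 3 → E3) (s1 s2 s3 : ℝ) : Prop :=
  IsModelTriple a v ∧ a 2 2 < a 0 2 ∧
  s1 = Real.sign (cross2 (v 0) (v 2)) ∧
  s2 = Real.sign (cross2 (v 1) (v 0)) ∧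
  s3 = Real.sign (cross2 (v 1) (v 2))

/-- A model triple point of type `(→, s₁, s₂, s₃)`: `S₃` passes over `S₁`, and the signs
of the crossings `S₁–S₃`, `S₁–S₂`, `S₂–S₃` are `s₁, s₂, s₃` respectively. -/
def ModelRight (a v : Fin 3 → E3) (s1 s2 s3 : ℝ) : Prop :=
  IsModelTriple a v ∧ a 0 2 < a 2 2 ∧
  s1 = Real.sign (cross2 (v 2) (v 0)) ∧
  s2 = Real.sign (cross2 (v 1) (v 0)) ∧
  s3 = Real.sign (cross2 (v 1) (v 2))

/-- The cube `(-δ, δ)⁴ ⊆ ℝ⁴`. -/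
def cube4 (δ : ℝ) : Set E4 := {x | ∀ i, |x i| < δ}

/-- The model configuration space integral `I_X^{X′₁}`: the two points `t₁ < t₂` lie on
`S₁`, the point `t₃` on `S₂` and the point `t₄` on `S₃`; the maps are
`h₁₃ = unit (f₂(t₃) - f₁(t₁))` and `h₄₂ = unit (f₁(t₂) - f₃(t₄))`. -/
def IX1model (a v : Fin 3 → E3) (δ : ℝ) (g : E3 → ℝ) : ℝ :=
  ∫ x in cube4 δ ∩ {x : E4 | x 0 < x 1},
    wedge22 g (fun x => unitv (seg (a 1) (v 1) (x 2) - seg (a 0) (v 0) (x 0)))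
      (fun x => unitv (seg (a 0) (v 0) (x 1) - seg (a 2) (v 2) (x 3))) x

/-- The model configuration space integral `I_X^{X′₂}` (`(X′₂, l)` for a model of type
`←`, `(X′₂, r)` for a model of type `→`): the two points `t₂ < t₃` lie on `S₂`, the
point `t₁` on `S₁` and the point `t₄` on `S₃`; the maps are
`h₁₃ = unit (f₂(t₃) - f₁(t₁))` and `h₄₂ = unit (f₂(t₂) - f₃(t₄))`. -/
def IX2model (a v : Fin 3 → E3) (δ : ℝ) (g : E3 → ℝ) : ℝ :=
  ∫ x in cube4 δ ∩ {x : E4 | x 1 < x 2},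
    wedge22 g (fun x => unitv (seg (a 1) (v 1) (x 2) - seg (a 0) (v 0) (x 0)))
      (fun x => unitv (seg (a 1) (v 1) (x 1) - seg (a 2) (v 2) (x 3))) x

/-- The model configuration space integral `I_X^{X′₃}`: the two points `t₃ < t₄` lie on
`S₃`, the point `t₁` on `S₁` and the point `t₂` on `S₂`; the maps are
`h₁₃ = unit (f₃(t₃) - f₁(t₁))` and `h₄₂ = unit (f₂(t₂) - f₃(t₄))`. -/
def IX3model (a v : Fin 3 → E3) (δ : ℝ) (g : E3 → ℝ) : ℝ :=
  ∫ x in cube4 δ ∩ {x : E4 | x 2 < x 3},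
    wedge22 g (fun x => unitv (seg (a 2) (v 2) (x 2) - seg (a 0) (v 0) (x 0)))
      (fun x => unitv (seg (a 1) (v 1) (x 1) - seg (a 2) (v 2) (x 3))) x

/-- The model `Y`-integral `I_Y^{s₁,s₂,s₃}` over `(-δ,δ)³ × ℝ³`: the point `t_k` lies on
`S_k` and `x₄ ∈ ℝ³` is free; the maps are `h₁₄ = unit (x₄ - f₁(t₁))`,
`h₄₂ = unit (f₂(t₂) - x₄)` and `h₃₄ = unit (x₄ - f₃(t₃))`. -/
def IYmodel (a v : Fin 3 → E3) (δ : ℝ) (g : E3 → ℝ) : ℝ :=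
  ∫ x in {x : E6 | |x 0| < δ ∧ |x 1| < δ ∧ |x 2| < δ ∧
      ptY x ≠ seg (a 0) (v 0) (x 0) ∧ ptY x ≠ seg (a 1) (v 1) (x 1) ∧
      ptY x ≠ seg (a 2) (v 2) (x 2)},
    wedge222 g (fun x => unitv (ptY x - seg (a 0) (v 0) (x 0)))
      (fun x => unitv (seg (a 1) (v 1) (x 1) - ptY x))
      (fun x => unitv (ptY x - seg (a 2) (v 2) (x 2))) x

/-- Near every (triple or higher) multiple point of the diagram, the strands of the long
knot `f` are straight segments parallel to the plane `N^⊥`. -/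
def StraightNearMultipleK (f : ℝ → E3) : Prop :=
  ∀ t u v : ℝ, t ≠ u → u ≠ v → t ≠ v →
    pr12 (f t) = pr12 (f u) → pr12 (f u) = pr12 (f v) →
    ∃ δ > (0 : ℝ), ∃ w : E3, w 2 = 0 ∧ ∀ s : ℝ, |s - t| < δ → f s = f t + (s - t) • w

/-- Near every (triple or higher) multiple point of the diagram, the strands of the long
link `f` are straight segments parallel to the plane `N^⊥`. -/
def StraightNearMultipleL (f : Fin 3 → ℝ → E3) : Prop :=
  ∀ (i j k : Fin 3) (t u v : ℝ), (i, t) ≠ (j, u) → (j, u) ≠ (k, v) → (i, t) ≠ (k, v) →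
    pr12 (f i t) = pr12 (f j u) → pr12 (f j u) = pr12 (f k v) →
    ∃ δ > (0 : ℝ), ∃ w : E3, w 2 = 0 ∧ ∀ s : ℝ, |s - t| < δ → f i s = f i t + (s - t) • w

/-! ### Closed 2-component links and the linking number -/

/-- A smooth loop in `ℝ³`, parametrized with period 1 and injective on a period. -/
def IsLoop (f : ℝ → E3) : Prop :=
  ContDiff ℝ (⊤ : ℕ∞) f ∧ (∀ t, f (t + 1) = f t) ∧ (∀ t, deriv f t ≠ 0) ∧
    ∀ s t : ℝ, f s = f t → ∃ n : ℤ, t - s = n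

/-- The diagram of the 2-component link `(f 0, f 1)` has only transverse double points. -/
def OnlyDouble2 (f : Fin 2 → ℝ → E3) : Prop :=
  (∀ i j s t, f i s ≠ f j t → pr12 (f i s) = pr12 (f j t) →
      cross2 (deriv (f i) s) (deriv (f j) t) ≠ 0) ∧
  ∀ i j k s t u, f i s ≠ f j t → f j t ≠ f k u → f i s ≠ f k u →
    pr12 (f i s) = pr12 (f j t) → pr12 (f j t) = pr12 (f k u) → False

/-- The crossings of the diagram at which `f₂` passes over `f₁` (one parameter period). -/
def Crossing12 (f₁ f₂ : ℝ → E3) : Set (ℝ × ℝ) :=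
  {p | p.1 ∈ Ico (0 : ℝ) 1 ∧ p.2 ∈ Ico (0 : ℝ) 1 ∧
    pr12 (f₁ p.1) = pr12 (f₂ p.2) ∧ pr3 (f₁ p.1) < pr3 (f₂ p.2)}

/-- The sum of the signs of the crossings of the diagram at which `f₂` passes over `f₁`;
this is the linking number `lk(f₁, f₂)`, i.e. the mapping degree of
`h : S¹ × S¹ → S²`. -/
def lkSum (f₁ f₂ : ℝ → E3) : ℝ :=
  ∑ᶠ p ∈ Crossing12 f₁ f₂, Real.sign (cross2 (deriv f₂ p.2) (deriv f₁ p.1))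

/-- The fundamental domain `[0,1) × [0,1)` of `S¹ × S¹`. -/
def sq01 : Set E2 := {x | x 0 ∈ Ico (0 : ℝ) 1 ∧ x 1 ∈ Ico (0 : ℝ) 1}

/-- `∫_{S¹×S¹} h*η` for `h(x₁,x₂) = unit (f₂(x₂) - f₁(x₁))`. -/
def lkIntegral (f₁ f₂ : ℝ → E3) (g : E3 → ℝ) : ℝ :=
  ∫ x in sq01, form2 g (fun x : E2 => unitv (f₂ (x 1) - f₁ (x 0))) x 0 1


/-! ### Linear algebra -/

lemma nsq3 (d : E3) : ‖d‖ ^ 2 = d 0 ^ 2 + d 1 ^ 2 + d 2 ^ 2 := by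
  rw [EuclideanSpace.norm_sq_eq, Fin.sum_univ_three]
  simp [sq_abs]

@[simp] lemma mk3_zero (x y z : ℝ) : mk3 x y z 0 = x := rfl
@[simp] lemma mk3_one (x y z : ℝ) : mk3 x y z 1 = y := rfl
@[simp] lemma mk3_two (x y z : ℝ) : mk3 x y z 2 = z := rfl

lemma ext3 {u v : E3} (h0 : u 0 = v 0) (h1 : u 1 = v 1) (h2 : u 2 = v 2) : u = v := by
  ext i; fin_cases i <;> assumption

lemma norm_unitv {d : E3} (hd : d ≠ 0) : ‖unitv d‖ = 1 := by
  simp only [unitv, norm_smul, norm_inv, norm_norm]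
  exact inv_mul_cancel₀ (norm_ne_zero_iff.mpr hd)

/-- The closed cone around the vertical direction. -/
def Cone (ε : ℝ) (d : E3) : Prop := (1 - ε) * ‖d‖ ≤ d 2

lemma Cone.add {ε : ℝ} (hε : ε ≤ 1) {d e : E3} (hd : Cone ε d) (he : Cone ε e) :
    Cone ε (d + e) := by
  unfold Cone at *
  have := norm_add_le d e
  have h2 : (d + e) 2 = d 2 + e 2 := rfl
  rw [h2]
  nlinarith

lemma cone_of_unitv {ε : ℝ} {d : E3} (hd : d ≠ 0) (h : ‖unitv d - NP‖ < ε) : Cone ε d := by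
  have hn : 0 < ‖d‖ := norm_pos_iff.mpr hd
  have h1 : |(unitv d - NP) 2| ≤ ‖unitv d - NP‖ := by
    have := PiLp.norm_apply_le (unitv d - NP) 2
    simpa using this
  have h2 : (unitv d - NP) 2 = ‖d‖⁻¹ * d 2 - 1 := rfl
  rw [h2] at h1
  have h3 := (abs_le.mp (h1.trans h.le)).1
  unfold Cone
  have h4 : ‖d‖ * (‖d‖⁻¹ * d 2) = d 2 := by field_simp
  nlinarith

lemma cone_of_g {ε : ℝ} {g : E3 → ℝ} (hg : IsEtaForm ε g) {d : E3} (hd : d ≠ 0)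
    (h : g (unitv d) ≠ 0) : Cone ε d :=
  cone_of_unitv hd (hg.2.1 _ (norm_unitv hd) h)

lemma cone_zero {d : E3} (h : ‖d‖ ≤ d 2) : d 0 = 0 ∧ d 1 = 0 := by
  have h1 := nsq3 d
  have h0 := norm_nonneg d
  have : ‖d‖ ^ 2 ≤ d 2 ^ 2 := by nlinarith
  constructor <;> nlinarith [sq_nonneg (d 0), sq_nonneg (d 1)]

/-- Half-turn about the vertical axis. -/
def rot (v : E3) : E3 := mk3 (-v 0) (-v 1) (v 2)

lemma norm_rot (v : E3) : ‖rot v‖ = ‖v‖ := by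
  rw [← sq_eq_sq₀ (norm_nonneg _) (norm_nonneg _), nsq3, nsq3]; simp [rot]

lemma unitv_rot (v : E3) : unitv (rot v) = rot (unitv v) := by
  unfold unitv; rw [norm_rot]
  apply ext3 <;> simp [rot]

lemma g_rot {ε : ℝ} {g : E3 → ℝ} (hg : IsEtaForm ε g) {v : E3} (hv : ‖v‖ = 1) :
    g (rot v) = g v := by
  have := hg.2.2.1 (-1) (by simp) v hv
  rw [← this]
  congr 1
  apply ext3 <;> simp [rot, act2]

/-! ### Pullback forms -/

lemma form2_unitv {n : ℕ} (g : E3 → ℝ) (D : EuclideanSpace ℝ (Fin n) → E3)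
    (x : EuclideanSpace ℝ (Fin n)) (hD : DifferentiableAt ℝ D x) (h0 : D x ≠ 0) (i j : Fin n) :
    form2 g (fun y => unitv (D y)) x i j =
      g (unitv (D x)) * ((‖D x‖⁻¹) ^ 3 * det3 (D x) (pdv D i x) (pdv D j x)) := by
  have hφ : DifferentiableAt ℝ (fun y => ‖D y‖⁻¹) x :=
    (hD.norm ℝ h0).inv (norm_ne_zero_iff.mpr h0)
  have key : ∀ k, pdv (fun y => unitv (D y)) k x =
      ‖D x‖⁻¹ • pdv D k x +
        (fderiv ℝ (fun y => ‖D y‖⁻¹) x (EuclideanSpace.single k 1)) • D x := by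
    intro k
    unfold pdv unitv
    rw [fderiv_fun_smul hφ hD]
    simp
  unfold form2
  rw [key i, key j]
  simp only [det3, unitv, PiLp.add_apply, PiLp.smul_apply, smul_eq_mul]
  ring

/-- The density of the pullback of `η` by `(s,t) ↦ unitv (f t - f s)`. -/
def Fk (f : ℝ → E3) (g : E3 → ℝ) (p : ℝ × ℝ) : ℝ :=
  g (unitv (f p.2 - f p.1)) * ((‖f p.2 - f p.1‖⁻¹) ^ 3 *
    det3 (f p.2 - f p.1) (-(deriv f p.1)) (deriv f p.2))

lemma hasFDerivAt_coord {n : ℕ} (f : ℝ → E3) (hf : Differentiable ℝ f) (k : Fin n)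
    (x : EuclideanSpace ℝ (Fin n)) :
    HasFDerivAt (fun y : EuclideanSpace ℝ (Fin n) => f (y k))
      ((EuclideanSpace.proj k : EuclideanSpace ℝ (Fin n) →L[ℝ] ℝ).smulRight (deriv f (x k))) x := by
  have h1 : HasFDerivAt (fun y : EuclideanSpace ℝ (Fin n) => y k)
      (EuclideanSpace.proj k : EuclideanSpace ℝ (Fin n) →L[ℝ] ℝ) x :=
    (EuclideanSpace.proj k : EuclideanSpace ℝ (Fin n) →L[ℝ] ℝ).hasFDerivAt
  have h2 := (hf (x k)).hasDerivAt.hasFDerivAt.comp x h1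
  exact h2.congr_fderiv (by ext v; simp)

lemma pdv_diff {n : ℕ} (f : ℝ → E3) (hf : Differentiable ℝ f) (k l i : Fin n)
    (x : EuclideanSpace ℝ (Fin n)) :
    pdv (fun y : EuclideanSpace ℝ (Fin n) => f (y k) - f (y l)) i x =
      (if k = i then deriv f (x k) else 0) - (if l = i then deriv f (x l) else 0) := by
  unfold pdv
  rw [((hasFDerivAt_coord f hf k x).fun_sub (hasFDerivAt_coord f hf l x)).fderiv]
  simp [ite_smul, PiLp.single_apply]

lemma form2_zero_left {n : ℕ} (g : E3 → ℝ) (h : EuclideanSpace ℝ (Fin n) → E3)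
    (x : EuclideanSpace ℝ (Fin n)) (i j : Fin n) : form2 g h x i j = - form2 g h x j i := by
  simp only [form2, det3]; ring

lemma wedge22_eval (M N : Fin 4 → Fin 4 → ℝ) (hM : ∀ i j, M i j = - M j i)
    (hN : ∀ i j, N i j = - N j i) (hM1 : ∀ j, M 1 j = 0) (hM3 : ∀ j, M 3 j = 0) :
    (1 / 4 : ℝ) * ∑ σ : Equiv.Perm (Fin 4),
      ((Equiv.Perm.sign σ : ℤ) : ℝ) * M (σ 0) (σ 1) * N (σ 2) (σ 3) = - (M 0 2 * N 1 3) := by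
  have hM1' : ∀ j, M j 1 = 0 := fun j => by rw [hM, hM1, neg_zero]
  have hM3' : ∀ j, M j 3 = 0 := fun j => by rw [hM, hM3, neg_zero]
  have hc : ∀ σ : Equiv.Perm (Fin 4),
      (if (σ 0 = 1 ∨ σ 0 = 3 ∨ σ 1 = 1 ∨ σ 1 = 3) then True else
        (σ 0 = 0 ∧ σ 1 = 2 ∧ σ 2 = 1 ∧ σ 3 = 3 ∧ (Equiv.Perm.sign σ : ℤ) = -1) ∨
        (σ 0 = 2 ∧ σ 1 = 0 ∧ σ 2 = 1 ∧ σ 3 = 3 ∧ (Equiv.Perm.sign σ : ℤ) = 1) ∨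
        (σ 0 = 0 ∧ σ 1 = 2 ∧ σ 2 = 3 ∧ σ 3 = 1 ∧ (Equiv.Perm.sign σ : ℤ) = 1) ∨
        (σ 0 = 2 ∧ σ 1 = 0 ∧ σ 2 = 3 ∧ σ 3 = 1 ∧ (Equiv.Perm.sign σ : ℤ) = -1)) := by decide
  have hterm : ∀ σ : Equiv.Perm (Fin 4),
      ((Equiv.Perm.sign σ : ℤ) : ℝ) * M (σ 0) (σ 1) * N (σ 2) (σ 3) =
      if (σ 0 = 1 ∨ σ 0 = 3 ∨ σ 1 = 1 ∨ σ 1 = 3) then 0 else - (M 0 2 * N 1 3) := by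
    intro σ
    have h := hc σ
    split_ifs at h ⊢ with hh
    · rcases hh with h | h | h | h <;> simp [h, hM1, hM3, hM1', hM3']
    · rcases h with ⟨h0, h1, h2, h3, h4⟩ | ⟨h0, h1, h2, h3, h4⟩ | ⟨h0, h1, h2, h3, h4⟩ |
        ⟨h0, h1, h2, h3, h4⟩ <;> rw [h0, h1, h2, h3, h4] <;> push_cast
      · ring
      · rw [hM 2 0]; ring
      · rw [hN 3 1]; ring
      · rw [hM 2 0, hN 3 1]; ring
  rw [Finset.sum_congr rfl fun σ _ => hterm σ, Finset.sum_ite]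
  have hcard : (Finset.univ.filter fun σ : Equiv.Perm (Fin 4) =>
    ¬ (σ 0 = 1 ∨ σ 0 = 3 ∨ σ 1 = 1 ∨ σ 1 = 3)).card = 4 := by decide
  rw [Finset.sum_const_zero, Finset.sum_const, hcard]
  simp

lemma omegaX_eq (f : ℝ → E3) (hf : IsLongKnot f) (g : E3 → ℝ) (x : E4) (hx : x ∈ CX) :
    omegaX f g x = Fk f g (x 0, x 2) * Fk f g (x 3, x 1) := by
  have hd : Differentiable ℝ f := hf.1.differentiable (by simp)
  obtain ⟨h01, h12, h23⟩ := hx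
  have n1 : f (x 2) - f (x 0) ≠ 0 := by
    intro h; have := hf.2.1 (sub_eq_zero.mp h); linarith
  have n2 : f (x 1) - f (x 3) ≠ 0 := by
    intro h; have := hf.2.1 (sub_eq_zero.mp h); linarith
  have d1 : DifferentiableAt ℝ (fun y : E4 => f (y 2) - f (y 0)) x :=
    ((hasFDerivAt_coord f hd 2 x).sub (hasFDerivAt_coord f hd 0 x)).differentiableAt
  have d2 : DifferentiableAt ℝ (fun y : E4 => f (y 1) - f (y 3)) x :=
    ((hasFDerivAt_coord f hd 1 x).sub (hasFDerivAt_coord f hd 3 x)).differentiableAt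
  have e1 := fun i j => form2_unitv g (fun y : E4 => f (y 2) - f (y 0)) x d1 n1 i j
  have e2 := fun i j => form2_unitv g (fun y : E4 => f (y 1) - f (y 3)) x d2 n2 i j
  simp only [pdv_diff f hd] at e1 e2
  unfold omegaX wedge22
  rw [wedge22_eval _ _ (form2_zero_left g _ x) (form2_zero_left g _ x), e1, e2]
  · simp [Fk, det3]; ring
  · intro j; rw [e1]; simp [det3]
  · intro j; rw [e1]; simp [det3]

/-! ### Measure-preserving identifications -/

lemma mp4 : MeasurePreserving
    (fun q : (ℝ × ℝ) × (ℝ × ℝ) => (![q.1.1, q.2.2, q.1.2, q.2.1] : Fin 4 → ℝ)) volume volume := by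
  have hm : Measurable
      (fun q : (ℝ × ℝ) × (ℝ × ℝ) => (![q.1.1, q.2.2, q.1.2, q.2.1] : Fin 4 → ℝ)) := by
    rw [measurable_pi_iff]
    intro i; fin_cases i <;> simp <;> fun_prop
  refine ⟨hm, ?_⟩
  symm
  rw [volume_pi]
  apply Measure.pi_eq
  intro s hs
  rw [Measure.map_apply hm (MeasurableSet.univ_pi hs)]
  have : (fun q : (ℝ × ℝ) × (ℝ × ℝ) => (![q.1.1, q.2.2, q.1.2, q.2.1] : Fin 4 → ℝ)) ⁻¹'
      (Set.pi univ s) = (s 0 ×ˢ s 2) ×ˢ (s 3 ×ˢ s 1) := by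
    ext q
    simp [Set.mem_pi, Fin.forall_fin_succ]
    tauto
  rw [this, Measure.volume_eq_prod, Measure.prod_prod, Measure.volume_eq_prod, Measure.prod_prod,
    Measure.prod_prod, Fin.prod_univ_four]
  ring

/-- The identification of `(ℝ × ℝ) × (ℝ × ℝ)` with `ℝ⁴`. -/
def eq4 : ((ℝ × ℝ) × (ℝ × ℝ)) ≃ᵐ E4 where
  toFun q := WithLp.toLp 2 ![q.1.1, q.2.2, q.1.2, q.2.1]
  invFun x := ((x 0, x 2), (x 3, x 1))
  left_inv q := rfl
  right_inv x := by ext i; fin_cases i <;> rfl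
  measurable_toFun := (WithLp.measurable_toLp 2 _).comp mp4.measurable
  measurable_invFun := by
    change Measurable (fun x : E4 => ((x 0, x 2), (x 3, x 1)))
    fun_prop

lemma mp_eq4 : MeasurePreserving eq4 volume volume :=
  (PiLp.volume_preserving_toLp (Fin 4)).comp mp4

lemma mp3 : MeasurePreserving
    (fun q : (ℝ × ℝ) × ℝ => (![q.1.1, q.1.2, q.2] : Fin 3 → ℝ)) volume volume := by
  have hm : Measurable
      (fun q : (ℝ × ℝ) × ℝ => (![q.1.1, q.1.2, q.2] : Fin 3 → ℝ)) := by
    rw [measurable_pi_iff]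
    intro i; fin_cases i <;> simp <;> fun_prop
  refine ⟨hm, ?_⟩
  symm
  rw [volume_pi]
  apply Measure.pi_eq
  intro s hs
  rw [Measure.map_apply hm (MeasurableSet.univ_pi hs)]
  have : (fun q : (ℝ × ℝ) × ℝ => (![q.1.1, q.1.2, q.2] : Fin 3 → ℝ)) ⁻¹'
      (Set.pi univ s) = (s 0 ×ˢ s 1) ×ˢ s 2 := by
    ext q
    simp [Set.mem_pi, Fin.forall_fin_succ]
    tauto
  rw [this, Measure.volume_eq_prod, Measure.prod_prod, Measure.volume_eq_prod, Measure.prod_prod,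
    Fin.prod_univ_three]

/-- The identification of `(ℝ × ℝ) × ℝ` with `ℝ³`. -/
def eq3 : ((ℝ × ℝ) × ℝ) ≃ᵐ E3 where
  toFun q := mk3 q.1.1 q.1.2 q.2
  invFun x := ((x 0, x 1), x 2)
  left_inv q := rfl
  right_inv x := by apply ext3 <;> rfl
  measurable_toFun := (WithLp.measurable_toLp 2 _).comp mp3.measurable
  measurable_invFun := by
    change Measurable (fun x : E3 => ((x 0, x 1), x 2))
    fun_prop

lemma mp_eq3 : MeasurePreserving eq3 volume volume :=
  (PiLp.volume_preserving_toLp (Fin 3)).comp mp3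

/-! ### Gnomonic coordinates -/

/-- `η` in gnomonic coordinates. -/
def Gt (g : E3 → ℝ) (y : ℝ × ℝ) : ℝ :=
  g (unitv (mk3 y.1 y.2 1)) * (‖mk3 y.1 y.2 1‖⁻¹) ^ 3

lemma norm_mk1_ge (y : ℝ × ℝ) : 1 ≤ ‖mk3 y.1 y.2 1‖ := by
  have h := nsq3 (mk3 y.1 y.2 1)
  simp at h
  nlinarith [norm_nonneg (mk3 y.1 y.2 1), sq_nonneg y.1, sq_nonneg y.2]

lemma mk1_ne (y : ℝ × ℝ) : mk3 y.1 y.2 1 ≠ 0 := by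
  have := norm_mk1_ge y
  intro h; rw [h] at this; simp at this; linarith

lemma polar_int (g : E3 → ℝ) :
    ∫ x : E3, g (unitv x) * (if ‖x‖ < 1 then 1 else 0) =
      (∫ v : Metric.sphere (0 : E3) 1, g v ∂((volume : Measure E3).toSphere)) * (1 / 3) := by
  have hfr : Module.finrank ℝ E3 = 3 := by simp
  calc
    ∫ x : E3, g (unitv x) * (if ‖x‖ < 1 then 1 else 0)
      = ∫ x : ({(0)}ᶜ : Set E3), g (unitv x.1) * (if ‖x.1‖ < 1 then 1 else 0)
          ∂((volume : Measure E3).comap (↑)) := by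
      rw [integral_subtype_comap (measurableSet_singleton _).compl
        fun x : E3 ↦ g (unitv x) * (if ‖x‖ < 1 then 1 else 0), restrict_compl_singleton]
    _ = ∫ x : Metric.sphere (0 : E3) 1 × Ioi (0 : ℝ), g x.1.1 * (if x.2.1 < 1 then 1 else 0)
          ∂(volume : Measure E3).toSphere.prod (.volumeIoiPow (Module.finrank ℝ E3 - 1)) := by
      rw [← (volume : Measure E3).measurePreserving_homeomorphUnitSphereProd.integral_comp
        (Homeomorph.measurableEmbedding _)]
      simp [unitv]
    _ = _ := by
      rw [integral_prod_mul (fun v : Metric.sphere (0 : E3) 1 => g v.1)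
        (fun r : Ioi (0 : ℝ) => if r.1 < 1 then (1 : ℝ) else 0)]
      congr 1
      rw [hfr]
      have h1 : (fun r : Ioi (0 : ℝ) => if r.1 < 1 then (1 : ℝ) else 0) =
          (Iio (⟨1, mem_Ioi.2 one_pos⟩ : Ioi (0 : ℝ))).indicator 1 := by
        ext r
        simp [indicator, ← Subtype.coe_lt_coe]
      rw [h1, integral_indicator_one measurableSet_Iio, Measure.real,
        Measure.volumeIoiPow_apply_Iio]
      rw [ENNReal.toReal_ofReal (by positivity)]
      norm_num

lemma measurable_unitv : Measurable unitv := by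
  unfold unitv; fun_prop

lemma norm_unitv_le (x : E3) : ‖unitv x‖ ≤ 1 := by
  by_cases h : x = 0
  · simp [unitv, h]
  · exact (norm_unitv h).le

lemma g_bdd {g : E3 → ℝ} (hg : Continuous g) : ∃ M, ∀ x, ‖g (unitv x)‖ ≤ M := by
  obtain ⟨M, hM⟩ := (isCompact_closedBall (0 : E3) 1).exists_bound_of_continuousOn hg.continuousOn
  exact ⟨M, fun x => hM _ (by simpa using norm_unitv_le x)⟩

lemma unitv_smul {c : ℝ} (hc : 0 < c) (x : E3) : unitv (c • x) = unitv x := by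
  unfold unitv
  rw [norm_smul, smul_smul, Real.norm_of_nonneg hc.le]
  congr 1
  field_simp

lemma gnomonic {ε : ℝ} (hε : ε ≤ 1 / 2) {g : E3 → ℝ} (hg : IsEtaForm ε g) :
    ∫ y, Gt g y = 1 := by
  have hgc : Continuous g := hg.1.continuous
  obtain ⟨M, hM⟩ := g_bdd hgc
  have hu2 : ∀ x : E3, x ≠ 0 → g (unitv x) ≠ 0 → (1 / 2) * ‖x‖ ≤ x 2 := by
    intro x hx h
    have := cone_of_g hg hx h
    unfold Cone at this
    nlinarith [norm_nonneg x]
  -- the test function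
  set H : E3 → ℝ := fun x => if 0 < x 2 ∧ ‖x‖ < 1 then g (unitv x) else 0 with hH
  have hHm : Measurable H := by
    apply Measurable.ite
    · apply MeasurableSet.inter
      · exact measurableSet_lt measurable_const
          (show Measurable (fun x : E3 => x 2) by fun_prop)
      · exact measurableSet_lt measurable_norm measurable_const
    · exact hgc.measurable.comp measurable_unitv
    · exact measurable_const
  have hHi : Integrable H := by
    have h0 : IntegrableOn (fun _ : E3 => M) (Metric.ball 0 1) :=
      integrableOn_const (by exact measure_ball_lt_top.ne)
    have h1 := h0.integrable_indicator measurableSet_ball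
    refine h1.mono' hHm.aestronglyMeasurable (Eventually.of_forall fun x => ?_)
    simp only [hH, indicator, Metric.mem_ball, dist_zero_right]
    split_ifs with h2 h3 h3
    · exact hM x
    · exact absurd h2.2 h3
    · simpa using (norm_nonneg _).trans (hM x)
    · simp
  have e1 : ∫ x : E3, H x = 1 / 3 := by
    have := polar_int g
    rw [hg.2.2.2, one_mul] at this
    rw [← this]
    apply integral_congr_ae
    have h0 : ∀ᵐ x : E3, x ≠ 0 := by
      simp [ae_iff]
    filter_upwards [h0] with x hx
    simp only [hH]
    by_cases h1 : g (unitv x) = 0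
    · simp [h1]
    · have h2 := hu2 x hx h1
      have h3 : 0 < x 2 := by have := norm_pos_iff.mpr hx; linarith
      simp [h3]
  -- Fubini
  have e2 : ∫ x : E3, H x = ∫ z : ℝ, ∫ w : ℝ × ℝ, H (mk3 w.1 w.2 z) := by
    rw [← mp_eq3.integral_comp eq3.measurableEmbedding, Measure.volume_eq_prod,
      integral_prod_symm]
    · rfl
    · rw [← Measure.volume_eq_prod]
      exact (mp_eq3.integrable_comp_emb eq3.measurableEmbedding).mpr hHi
  set P : ℝ × ℝ → ℝ → ℝ := fun y z =>
    (if 0 < z ∧ z < ‖mk3 y.1 y.2 1‖⁻¹ then z ^ 2 else 0) * g (unitv (mk3 y.1 y.2 1)) with hP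
  have e3 : ∀ z : ℝ, ∫ w : ℝ × ℝ, H (mk3 w.1 w.2 z) = ∫ y : ℝ × ℝ, P y z := by
    intro z
    by_cases hz : 0 < z
    · have := Measure.integral_comp_smul (volume : Measure (ℝ × ℝ))
        (fun w : ℝ × ℝ => H (mk3 w.1 w.2 z)) z
      simp only [Module.finrank_prod, Module.finrank_self, smul_eq_mul] at this
      have h2 : ∫ w : ℝ × ℝ, H (mk3 w.1 w.2 z) =
          z ^ 2 * ∫ y : ℝ × ℝ, H (mk3 (z • y).1 (z • y).2 z) := by
        rw [this, abs_of_pos (by positivity)]; field_simp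
      rw [h2, ← integral_const_mul]
      congr 1
      ext y
      have h3 : mk3 (z • y).1 (z • y).2 z = z • mk3 y.1 y.2 1 := by
        apply ext3 <;> simp
      rw [h3]
      simp only [hH, hP]
      rw [unitv_smul hz, norm_smul, Real.norm_of_nonneg hz.le]
      have hn : 0 < ‖mk3 y.1 y.2 1‖ := norm_pos_iff.mpr (mk1_ne y)
      have h4 : z * ‖mk3 y.1 y.2 1‖ < 1 ↔ z < ‖mk3 y.1 y.2 1‖⁻¹ := by
        rw [lt_inv_comm₀ hz hn, ← one_div z, lt_div_iff₀ hz, mul_comm]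
      simp [hz, h4]
    · have h1 : ∀ w : ℝ × ℝ, H (mk3 w.1 w.2 z) = 0 := by intro w; simp [hH, hz]
      have h2 : ∀ y : ℝ × ℝ, P y z = 0 := by intro w; simp [hP, hz]
      simp [h1, h2]
  have hmm : Measurable (fun y : ℝ × ℝ => mk3 y.1 y.2 1) := by
    have : (fun y : ℝ × ℝ => mk3 y.1 y.2 1) = fun y => eq3 (y, 1) := rfl
    rw [this]; exact eq3.measurable.comp (by fun_prop)
  have hPi : Integrable (Function.uncurry P) (volume.prod volume) := by
    have hm : Measurable (Function.uncurry P) := by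
      apply Measurable.mul
      · apply Measurable.ite
        · apply MeasurableSet.inter
          · exact measurableSet_lt measurable_const measurable_snd
          · exact measurableSet_lt measurable_snd (hmm.comp measurable_fst).norm.inv
        · fun_prop
        · exact measurable_const
      · exact hgc.measurable.comp (measurable_unitv.comp (hmm.comp measurable_fst))
    have h0 : IntegrableOn (fun _ : (ℝ × ℝ) × ℝ => M) (Metric.closedBall 0 2)
        (volume.prod volume) := by
      rw [← Measure.volume_eq_prod]
      exact integrableOn_const (isCompact_closedBall _ _).measure_lt_top.ne
    have h1 := h0.integrable_indicator Metric.isClosed_closedBall.measurableSet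
    refine h1.mono' hm.aestronglyMeasurable (Eventually.of_forall fun ⟨y, z⟩ => ?_)
    have hM0 : 0 ≤ M := (norm_nonneg _).trans (hM 0)
    by_cases h2 : 0 < z ∧ z < ‖mk3 y.1 y.2 1‖⁻¹
    · by_cases h3 : g (unitv (mk3 y.1 y.2 1)) = 0
      · simp only [Function.uncurry, hP, h3, mul_zero, norm_zero]
        exact indicator_nonneg (fun _ _ => hM0) _
      · have h4 := hu2 _ (mk1_ne y) h3
        have h5 := nsq3 (mk3 y.1 y.2 1)
        simp only [mk3_zero, mk3_one, mk3_two] at h4 h5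
        have h6 : ‖mk3 y.1 y.2 1‖ ^ 2 ≤ 4 := by nlinarith [norm_nonneg (mk3 y.1 y.2 1)]
        have h7 : z < 1 := h2.2.trans_le (inv_le_one_of_one_le₀ (norm_mk1_ge y))
        have hmem : ((y, z) : (ℝ × ℝ) × ℝ) ∈ Metric.closedBall (0 : (ℝ × ℝ) × ℝ) 2 := by
          simp only [Metric.mem_closedBall, dist_zero_right, Prod.norm_def, Real.norm_eq_abs,
            sup_le_iff]
          refine ⟨⟨abs_le_of_sq_le_sq (by nlinarith) (by norm_num),
            abs_le_of_sq_le_sq (by nlinarith) (by norm_num)⟩, ?_⟩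
          rw [abs_of_pos h2.1]; linarith
        rw [indicator_of_mem hmem]
        simp only [Function.uncurry, hP, if_pos h2, norm_mul]
        have h8 : ‖z ^ 2‖ ≤ 1 := by
          rw [Real.norm_of_nonneg (by positivity)]; nlinarith [h2.1]
        calc _ ≤ 1 * M := mul_le_mul h8 (hM _) (norm_nonneg _) zero_le_one
          _ = M := one_mul M
    · simp only [Function.uncurry, hP, if_neg h2, zero_mul, norm_zero]
      exact indicator_nonneg (fun _ _ => hM0) _
  have e4 : ∫ z : ℝ, ∫ y : ℝ × ℝ, P y z = ∫ y : ℝ × ℝ, ∫ z : ℝ, P y z :=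
    (integral_integral_swap hPi).symm
  have e5 : ∀ y : ℝ × ℝ, ∫ z : ℝ, P y z = (1 / 3) * Gt g y := by
    intro y
    simp only [hP]
    rw [integral_mul_const]
    set c := ‖mk3 y.1 y.2 1‖⁻¹ with hc
    have hc0 : 0 ≤ c := by positivity
    have h1 : (fun z : ℝ => if 0 < z ∧ z < c then z ^ 2 else 0) =
        (Ioo 0 c).indicator (fun z => z ^ 2) := by
      ext z; simp [indicator]
    rw [h1, integral_indicator measurableSet_Ioo, ← integral_Ioc_eq_integral_Ioo,
      ← intervalIntegral.integral_of_le hc0, integral_pow]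
    simp only [Gt, ← hc]
    norm_num; ring
  rw [e2, integral_congr_ae (Eventually.of_forall e3), e4] at e1
  simp only [e5] at e1
  rw [integral_const_mul] at e1
  linarith

/-! ### Local degree computation at a crossing -/

/-- Gnomonic coordinates of the Gauss map. -/
def Psi (f : ℝ → E3) (p : ℝ × ℝ) : ℝ × ℝ :=
  ((f p.2 0 - f p.1 0) / (f p.2 2 - f p.1 2), (f p.2 1 - f p.1 1) / (f p.2 2 - f p.1 2))

/-- Its Jacobian matrix. -/
def PsiM (f : ℝ → E3) (p : ℝ × ℝ) : Matrix (Fin 2) (Fin 2) ℝ :=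
  !![(-(deriv f p.1 0) * (f p.2 2 - f p.1 2) + (f p.2 0 - f p.1 0) * deriv f p.1 2) /
        (f p.2 2 - f p.1 2) ^ 2,
     (deriv f p.2 0 * (f p.2 2 - f p.1 2) - (f p.2 0 - f p.1 0) * deriv f p.2 2) /
        (f p.2 2 - f p.1 2) ^ 2;
     (-(deriv f p.1 1) * (f p.2 2 - f p.1 2) + (f p.2 1 - f p.1 1) * deriv f p.1 2) /
        (f p.2 2 - f p.1 2) ^ 2,
     (deriv f p.2 1 * (f p.2 2 - f p.1 2) - (f p.2 1 - f p.1 1) * deriv f p.2 2) /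
        (f p.2 2 - f p.1 2) ^ 2]

/-- Its derivative. -/
def PsiL (f : ℝ → E3) (p : ℝ × ℝ) : ℝ × ℝ →L[ℝ] ℝ × ℝ :=
  LinearMap.toContinuousLinearMap
    (Matrix.toLin (Module.Basis.finTwoProd ℝ) (Module.Basis.finTwoProd ℝ) (PsiM f p))

lemma hasDerivAt_comp {f : ℝ → E3} (hf : Differentiable ℝ f) (i : Fin 3) (t : ℝ) :
    HasDerivAt (fun s => f s i) (deriv f t i) t := by
  have h := (hf t).hasDerivAt
  have h2 := (EuclideanSpace.proj i : E3 →L[ℝ] ℝ).hasFDerivAt.comp_hasDerivAt t h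
  exact h2

lemma psi_hasFDerivAt {f : ℝ → E3} (hf : Differentiable ℝ f) (p : ℝ × ℝ)
    (h2 : f p.2 2 - f p.1 2 ≠ 0) : HasFDerivAt (Psi f) (PsiL f p) p := by
  have hd : ∀ i : Fin 3, HasFDerivAt (fun q : ℝ × ℝ => f q.2 i - f q.1 i)
      ((deriv f p.2 i) • (ContinuousLinearMap.snd ℝ ℝ ℝ) -
        (deriv f p.1 i) • (ContinuousLinearMap.fst ℝ ℝ ℝ)) p := by
    intro i
    exact ((hasDerivAt_comp hf i p.2).comp_hasFDerivAt p hasFDerivAt_snd).sub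
      ((hasDerivAt_comp hf i p.1).comp_hasFDerivAt p hasFDerivAt_fst)
  have h0 := (hd 0).mul ((hasDerivAt_inv h2).comp_hasFDerivAt p (hd 2))
  have h1 := (hd 1).mul ((hasDerivAt_inv h2).comp_hasFDerivAt p (hd 2))
  have h := h0.prodMk h1
  have e : (fun q : ℝ × ℝ => ((f q.2 0 - f q.1 0) * ((fun y => y⁻¹) ∘ (fun q : ℝ × ℝ => f q.2 2 - f q.1 2)) q,
      (f q.2 1 - f q.1 1) * ((fun y => y⁻¹) ∘ (fun q : ℝ × ℝ => f q.2 2 - f q.1 2)) q)) = Psi f := by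
    funext q; simp [Psi, div_eq_mul_inv]
  refine HasFDerivAt.congr_fderiv (f := Psi f) (e ▸ h) ?_
  unfold PsiL
  rw [PsiM, Matrix.toLin_finTwoProd_toContinuousLinearMap]
  ext <;> simp <;> field_simp <;> ring

lemma psiL_det (f : ℝ → E3) (p : ℝ × ℝ) (h2 : f p.2 2 - f p.1 2 ≠ 0) :
    (PsiL f p).det = det3 (f p.2 - f p.1) (-(deriv f p.1)) (deriv f p.2) /
      (f p.2 2 - f p.1 2) ^ 3 := by
  have : (PsiL f p).det = (PsiM f p).det := by
    rw [PsiL, ContinuousLinearMap.det, LinearMap.coe_toContinuousLinearMap, LinearMap.det_toLin]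
  rw [this, PsiM, Matrix.det_fin_two_of]
  simp only [det3, PiLp.sub_apply, PiLp.neg_apply]
  field_simp
  ring

lemma Fk_eq (f : ℝ → E3) (g : E3 → ℝ) (p : ℝ × ℝ) (h2 : 0 < f p.2 2 - f p.1 2) :
    Fk f g p = (PsiL f p).det * Gt g (Psi f p) := by
  rw [psiL_det f p h2.ne']
  have e : mk3 (Psi f p).1 (Psi f p).2 1 = (f p.2 2 - f p.1 2)⁻¹ • (f p.2 - f p.1) := by
    apply ext3
    · simp [Psi]; ring
    · simp [Psi]; ring
    · simp [inv_mul_cancel₀ h2.ne']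
  unfold Fk Gt
  rw [e, unitv_smul (inv_pos.mpr h2), norm_smul, Real.norm_of_nonneg (inv_pos.mpr h2).le]
  field_simp

lemma Gt_supp {ε : ℝ} (hε : ε ≤ 1 / 2) {g : E3 → ℝ} (hg : IsEtaForm ε g) {y : ℝ × ℝ}
    (h : Gt g y ≠ 0) : y.1 ^ 2 + y.2 ^ 2 ≤ 8 * ε := by
  have h1 : g (unitv (mk3 y.1 y.2 1)) ≠ 0 := by
    intro h0; apply h; simp [Gt, h0]
  have h2 := cone_of_g hg (mk1_ne y) h1
  have h3 := nsq3 (mk3 y.1 y.2 1)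
  have h4 := norm_mk1_ge y
  unfold Cone at h2
  simp only [mk3_zero, mk3_one, mk3_two] at h2 h3
  set n := ‖mk3 y.1 y.2 1‖
  have : n ≤ 2 := by nlinarith
  have he : 0 ≤ ε := by
    by_contra hc
    push Not at hc
    nlinarith
  nlinarith

lemma Gt_integrable {ε : ℝ} (hε : ε ≤ 1 / 2) {g : E3 → ℝ} (hg : IsEtaForm ε g) :
    Integrable (Gt g) := by
  by_contra h
  have := gnomonic hε hg
  rw [integral_undef h] at this
  norm_num at this

lemma csign_eq (f : ℝ → E3) {p : ℝ × ℝ} (hp : p ∈ CrossingK f) :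
    csignK f p = Real.sign ((PsiL f p).det) := by
  obtain ⟨_, h1, h2⟩ := hp
  simp only [pr12, Prod.mk.injEq, pr3] at h1 h2
  have h3 : 0 < f p.2 2 - f p.1 2 := by linarith
  rw [psiL_det f p h3.ne']
  have : det3 (f p.2 - f p.1) (-(deriv f p.1)) (deriv f p.2) / (f p.2 2 - f p.1 2) ^ 3 =
      ((f p.2 2 - f p.1 2) ^ 2)⁻¹ * cross2 (deriv f p.2) (deriv f p.1) := by
    simp only [det3, PiLp.sub_apply, PiLp.neg_apply, cross2]
    rw [h1.1, h1.2]
    field_simp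
    ring
  have hpos : 0 < ((f p.2 2 - f p.1 2) ^ 2)⁻¹ := by positivity
  rw [this, csignK]
  rcases lt_trichotomy (cross2 (deriv f p.2) (deriv f p.1)) 0 with h | h | h
  · rw [Real.sign_of_neg h, Real.sign_of_neg (mul_neg_of_pos_of_neg hpos h)]
  · rw [h]; simp
  · rw [Real.sign_of_pos h, Real.sign_of_pos (mul_pos hpos h)]

lemma psi_contDiffAt {f : ℝ → E3} (hf : ContDiff ℝ (⊤ : ℕ∞) f) (p : ℝ × ℝ)
    (h2 : f p.2 2 - f p.1 2 ≠ 0) : ContDiffAt ℝ 1 (Psi f) p := by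
  have hc : ∀ i : Fin 3, ContDiff ℝ 1 (fun s => f s i) := by
    intro i
    have := (EuclideanSpace.proj i : E3 →L[ℝ] ℝ).contDiff.comp (hf.of_le (m := 1) (by exact_mod_cast le_top))
    exact this
  have hd : ∀ i : Fin 3, ContDiffAt ℝ 1 (fun q : ℝ × ℝ => f q.2 i - f q.1 i) p := fun i =>
    (((hc i).comp contDiff_snd).sub ((hc i).comp contDiff_fst)).contDiffAt
  exact ((hd 0).div (hd 2) h2).prodMk ((hd 1).div (hd 2) h2)

lemma psi_zero {f : ℝ → E3} {p : ℝ × ℝ} (hp : pr12 (f p.1) = pr12 (f p.2)) : Psi f p = 0 := by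
  simp only [pr12, Prod.mk.injEq] at hp
  simp [Psi, hp.1, hp.2]

lemma continuous_det {f : ℝ → E3} (hf : ContDiff ℝ (⊤ : ℕ∞) f) :
    Continuous fun p : ℝ × ℝ => det3 (f p.2 - f p.1) (-(deriv f p.1)) (deriv f p.2) := by
  have h1 : Continuous f := hf.continuous
  have h2 : Continuous (deriv f) := hf.continuous_deriv (by simp)
  have a : ∀ i : Fin 3, Continuous fun t => f t i := fun i =>
    (EuclideanSpace.proj i : E3 →L[ℝ] ℝ).continuous.comp h1
  have b : ∀ i : Fin 3, Continuous fun t => deriv f t i := fun i =>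
    (EuclideanSpace.proj i : E3 →L[ℝ] ℝ).continuous.comp h2
  have a1 := a 0
  have a2 := a 1
  have a3 := a 2
  have b1 := b 0
  have b2 := b 1
  have b3 := b 2
  simp only [det3, PiLp.sub_apply, PiLp.neg_apply]
  fun_prop

lemma continuous_comp3 {f : ℝ → E3} (hf : Continuous f) (i : Fin 3) :
    Continuous fun t => f t i :=
  (EuclideanSpace.proj i : E3 →L[ℝ] ℝ).continuous.comp hf

lemma continuous_d2 {f : ℝ → E3} (hf : Continuous f) :
    Continuous fun p : ℝ × ℝ => f p.2 2 - f p.1 2 :=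
  ((continuous_comp3 hf 2).comp continuous_snd).sub ((continuous_comp3 hf 2).comp continuous_fst)

set_option maxHeartbeats 1000000 in
lemma local_lemma (f : ℝ → E3) (hf : IsLongKnot f) (hD : TransverseK f) (p0 : ℝ × ℝ)
    (hp : p0 ∈ CrossingK f) :
    ∀ᶠ δ in 𝓝[>] (0 : ℝ),
      (∀ p ∈ Metric.ball p0 δ, pr12 (f p.1) = pr12 (f p.2) → p = p0) ∧
      ∀ᶠ ε in 𝓝[>] (0 : ℝ), ∀ g, IsEtaForm ε g →
        IntegrableOn (Fk f g) (Metric.ball p0 δ) ∧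
          ∫ p in Metric.ball p0 δ, Fk f g p = csignK f p0 := by
  have hdf : Differentiable ℝ f := hf.1.differentiable (by simp)
  obtain ⟨hp1, hp2, hp3⟩ := hp
  have h2 : 0 < f p0.2 2 - f p0.1 2 := by simp only [pr3] at hp3; linarith
  have hs := csign_eq f ⟨hp1, hp2, hp3⟩
  have hdet0 : (PsiL f p0).det ≠ 0 := by
    intro h0
    rw [h0, Real.sign_zero, csignK, Real.sign_eq_zero_iff] at hs
    exact hD _ _ (Ne.symm hp1) hp2.symm hs
  obtain ⟨L, hL⟩ : ∃ L, L = (PsiL f p0).toContinuousLinearEquivOfDetNeZero hdet0 := ⟨_, rfl⟩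
  have hder : HasFDerivAt (Psi f) (L : ℝ × ℝ →L[ℝ] ℝ × ℝ) p0 := by
    have := psi_hasFDerivAt hdf p0 h2.ne'
    rw [hL]; exact this
  have hcd := psi_contDiffAt hf.1 p0 h2.ne'
  obtain ⟨e, hesrc, hecoe⟩ : ∃ e : OpenPartialHomeomorph (ℝ × ℝ) (ℝ × ℝ),
      p0 ∈ e.source ∧ (e : ℝ × ℝ → ℝ × ℝ) = Psi f :=
    ⟨hcd.toOpenPartialHomeomorph (Psi f) hder one_ne_zero,
      hcd.mem_toOpenPartialHomeomorph_source hder one_ne_zero, rfl⟩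
  obtain ⟨s, hsdef⟩ : ∃ s, s = (PsiL f p0).det := ⟨_, rfl⟩
  rw [← hsdef] at hdet0 hs
  have hcont2 := continuous_d2 hf.1.continuous
  -- good open set
  set V : Set (ℝ × ℝ) := e.source ∩ {p | 0 < f p.2 2 - f p.1 2} ∩
    {p | 0 < s * det3 (f p.2 - f p.1) (-(deriv f p.1)) (deriv f p.2)} with hV
  have hVo : IsOpen V := (e.open_source.inter (isOpen_lt continuous_const hcont2)).inter
    (isOpen_lt continuous_const (continuous_const.mul (continuous_det hf.1)))
  have hVp : p0 ∈ V := by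
    refine ⟨⟨hesrc, h2⟩, ?_⟩
    have := psiL_det f p0 h2.ne'
    have h3 : det3 (f p0.2 - f p0.1) (-(deriv f p0.1)) (deriv f p0.2) =
        s * (f p0.2 2 - f p0.1 2) ^ 3 := by
      rw [hsdef, this]; field_simp
    simp only [mem_ofPred_eq]
    rw [h3]
    have : 0 < s * s := mul_self_pos.mpr hdet0
    have h5 : 0 < (f p0.2 2 - f p0.1 2) ^ 3 := by positivity
    nlinarith [mul_pos this h5]
  obtain ⟨r, hr, hrV⟩ := Metric.isOpen_iff.mp hVo p0 hVp
  have hev : ∀ᶠ δ in 𝓝[>] (0 : ℝ), δ < r ∧ 0 < δ := by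
    filter_upwards [Ioo_mem_nhdsGT hr] with δ hδ using ⟨hδ.2, hδ.1⟩
  filter_upwards [hev] with δ hδ
  set B := Metric.ball p0 δ with hB
  have hBV : B ⊆ V := (Metric.ball_subset_ball hδ.1.le).trans hrV
  have hBsrc : B ⊆ e.source := fun p hp => (hBV hp).1.1
  have hinj : InjOn (Psi f) B := hecoe ▸ e.injOn.mono hBsrc
  have hp0B : p0 ∈ B := Metric.mem_ball_self hδ.2
  refine ⟨fun p hpB heq => hinj hpB hp0B ((psi_zero heq).trans (psi_zero hp2).symm), ?_⟩
  have himo : IsOpen (Psi f '' B) := hecoe ▸ e.isOpen_image_of_subset_source Metric.isOpen_ball hBsrc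
  have hmem : (0 : ℝ × ℝ) ∈ Psi f '' B := ⟨p0, hp0B, psi_zero hp2⟩
  obtain ⟨ρ, hρ, hρim⟩ := Metric.isOpen_iff.mp himo 0 hmem
  have hρ2 : 0 < min (1 / 2 : ℝ) (ρ ^ 2 / 8) := by positivity
  filter_upwards [Ioo_mem_nhdsGT hρ2] with ε hε g hg
  have hε1 : ε ≤ 1 / 2 := hε.2.le.trans (min_le_left _ _)
  have hε2 : 8 * ε < ρ ^ 2 := by
    have := hε.2.trans_le (min_le_right _ _); linarith
  have hsupp : ∀ y, y ∉ Psi f '' B → Gt g y = 0 := by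
    intro y hy
    by_contra h
    have h1 := Gt_supp hε1 hg h
    apply hy; apply hρim
    rw [mem_ball_zero_iff, Prod.norm_def, max_lt_iff]
    constructor
    · rw [Real.norm_eq_abs]; apply abs_lt_of_sq_lt_sq _ hρ.le; nlinarith [sq_nonneg y.2]
    · rw [Real.norm_eq_abs]; apply abs_lt_of_sq_lt_sq _ hρ.le; nlinarith [sq_nonneg y.1]
  have hI : ∫ y in Psi f '' B, Gt g y = 1 := by
    rw [setIntegral_eq_integral_of_forall_compl_eq_zero hsupp, gnomonic hε1 hg]
  have hderB : ∀ p ∈ B, HasFDerivWithinAt (Psi f) (PsiL f p) B p := fun p hp =>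
    (psi_hasFDerivAt hdf p (hBV hp).1.2.ne').hasFDerivWithinAt
  have hms : MeasurableSet B := Metric.isOpen_ball.measurableSet
  have hFk : ∀ p ∈ B, Fk f g p = csignK f p0 * (|(PsiL f p).det| • Gt g (Psi f p)) := by
    intro p hp
    have h3 : (0 : ℝ) < f p.2 2 - f p.1 2 := (hBV hp).1.2
    have h4 : 0 < s * (PsiL f p).det := by
      rw [psiL_det f p h3.ne', ← mul_div_assoc]
      exact div_pos (hBV hp).2 (by positivity)
    rw [Fk_eq f g p h3, hs, smul_eq_mul, ← mul_assoc]
    congr 1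
    rcases lt_or_gt_of_ne hdet0 with h | h
    · rw [Real.sign_of_neg h]
      have : (PsiL f p).det < 0 := by
        by_contra hc
        push Not at hc
        exact absurd h4 (not_lt.mpr (mul_nonpos_of_nonpos_of_nonneg h.le hc))
      rw [abs_of_neg this]; ring
    · rw [Real.sign_of_pos h]
      have : 0 < (PsiL f p).det := pos_of_mul_pos_right h4 h.le
      rw [abs_of_pos this]; ring
  have hIntg := (integrableOn_image_iff_integrableOn_abs_det_fderiv_smul volume hms hderB hinj
    (Gt g)).mp (Gt_integrable hε1 hg).integrableOn
  constructor
  · exact (integrableOn_congr_fun (fun p hp => hFk p hp) hms).mpr (hIntg.const_mul _)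
  · rw [setIntegral_congr_fun hms (fun p hp => hFk p hp), integral_const_mul,
      ← integral_image_eq_integral_abs_det_fderiv_smul volume hms hderB hinj, hI, mul_one]

/-! ### Compactness -/

lemma slope_limit {f : ℝ → E3} (hf : ContDiff ℝ (⊤ : ℕ∞) f) {s t : ℕ → ℝ} {a : ℝ}
    (hs : Tendsto s atTop (𝓝 a)) (ht : Tendsto t atTop (𝓝 a)) (hne : ∀ n, t n - s n ≠ 0) :
    Tendsto (fun n => (t n - s n)⁻¹ • (f (t n) - f (s n))) atTop (𝓝 (deriv f a)) := by
  have h1 : HasStrictDerivAt f (deriv f a) a := hf.contDiffAt.hasStrictDerivAt (by simp)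
  have h2 := h1.hasStrictFDerivAt.isLittleO
  have h3 : Tendsto (fun n => (t n, s n)) atTop (𝓝 (a, a)) := ht.prodMk_nhds hs
  have h4 := (h2.comp_tendsto h3).tendsto_inv_smul_nhds_zero
  have h5 := h4.add_const (deriv f a)
  rw [zero_add] at h5
  refine h5.congr fun n => ?_
  simp only [Function.comp, smul_sub]
  simp [smul_smul, inv_mul_cancel₀ (hne n)]

lemma pair_limit {f : ℝ → E3} (hf : IsLongKnot f) {σ : ℝ} (hσ : σ = 1 ∨ σ = -1)
    {s t ε : ℕ → ℝ} {a b : ℝ} (hs : Tendsto s atTop (𝓝 a)) (ht : Tendsto t atTop (𝓝 b))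
    (hε : Tendsto ε atTop (𝓝 0)) (hlt : ∀ n, 0 < σ * (t n - s n))
    (hc : ∀ n, Cone (ε n) (f (t n) - f (s n))) :
    (a, b) ∈ CrossingK f ∨
      (a = b ∧ deriv f a 0 = 0 ∧ deriv f a 1 = 0 ∧ 0 < σ * deriv f a 2) := by
  have hfc : Continuous f := hf.1.continuous
  have hp2 : Continuous fun v : E3 => v 2 := (EuclideanSpace.proj 2 : E3 →L[ℝ] ℝ).continuous
  have h1ε : Tendsto (fun n => 1 - ε n) atTop (𝓝 1) := by
    simpa using hε.const_sub 1
  by_cases hab : a = b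
  · right
    subst hab
    have hne : ∀ n, t n - s n ≠ 0 := fun n h => by have := hlt n; simp [h] at this
    have hl := slope_limit hf.1 hs ht hne
    have hcone : ∀ n, (1 - ε n) * ‖(t n - s n)⁻¹ • (f (t n) - f (s n))‖ ≤
        σ * ((t n - s n)⁻¹ • (f (t n) - f (s n))) 2 := by
      intro n
      have h1 := hc n
      have h2 := hlt n
      unfold Cone at h1
      have h3 : ‖(t n - s n)⁻¹‖ = σ * (t n - s n)⁻¹ := by
        rw [norm_inv, Real.norm_eq_abs]
        rcases hσ with rfl | rfl
        · rw [abs_of_pos (by linarith)]; ring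
        · rw [abs_of_neg (by linarith), inv_neg]; ring
      have h4 : 0 ≤ ‖(t n - s n)⁻¹‖ := norm_nonneg _
      rw [norm_smul]
      have h5 : ((t n - s n)⁻¹ • (f (t n) - f (s n))) 2 = (t n - s n)⁻¹ * (f (t n) - f (s n)) 2 := rfl
      rw [h5, ← mul_assoc σ, ← h3]
      nlinarith [mul_le_mul_of_nonneg_left h1 h4]
    have hlim := le_of_tendsto_of_tendsto' (h1ε.mul hl.norm)
      (((hp2.tendsto _).comp hl).const_mul σ) hcone
    rw [one_mul] at hlim
    have hnorm : ‖σ • deriv f a‖ = ‖deriv f a‖ := by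
      rw [norm_smul]; rcases hσ with rfl | rfl <;> simp
    have hz := cone_zero (d := σ • deriv f a) (by rw [hnorm]; exact hlim)
    have hσ0 : σ ≠ 0 := by rcases hσ with rfl | rfl <;> norm_num
    have e0 : σ * deriv f a 0 = 0 := hz.1
    have e1 : σ * deriv f a 1 = 0 := hz.2
    refine ⟨rfl, (mul_eq_zero.mp e0).resolve_left hσ0, (mul_eq_zero.mp e1).resolve_left hσ0, ?_⟩
    exact lt_of_lt_of_le (norm_pos_iff.mpr (hf.2.2.1 a)) hlim
  · left
    have hd : Tendsto (fun n => f (t n) - f (s n)) atTop (𝓝 (f b - f a)) :=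
      ((hfc.tendsto _).comp ht).sub ((hfc.tendsto _).comp hs)
    have hlim := le_of_tendsto_of_tendsto' (h1ε.mul hd.norm) ((hp2.tendsto _).comp hd) hc
    rw [one_mul] at hlim
    have hz := cone_zero hlim
    have hne : f b - f a ≠ 0 := fun h => hab (hf.2.1 (sub_eq_zero.mp h)).symm
    have hpos : 0 < (f b - f a) 2 := lt_of_lt_of_le (norm_pos_iff.mpr hne) hlim
    have e0 : f b 0 - f a 0 = 0 := hz.1
    have e1 : f b 1 - f a 1 = 0 := hz.2
    have e2 : 0 < f b 2 - f a 2 := hpos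
    refine ⟨hab, ?_, ?_⟩
    · simp only [pr12, Prod.mk.injEq]; constructor <;> linarith
    · simp only [pr3]; linarith

/-- Pairs of crossings whose parameters are weakly interleaved as in `X`. -/
def Kset (f : ℝ → E3) : Set ((ℝ × ℝ) × (ℝ × ℝ)) :=
  {k | k.1 ∈ CrossingK f ∧ k.2 ∈ CrossingK f ∧ k.1.1 ≤ k.2.2 ∧ k.2.2 ≤ k.1.2 ∧ k.1.2 ≤ k.2.1}

/-- Weakly interleaved quadruples. -/
def Sbar : Set ((ℝ × ℝ) × (ℝ × ℝ)) :=
  {k | k.1.1 < k.1.2 ∧ k.2.2 < k.2.1 ∧ k.1.1 ≤ k.2.2 ∧ k.2.2 ≤ k.1.2 ∧ k.1.2 ≤ k.2.1}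

lemma vert_not_crossing {f : ℝ → E3} (hD : TransverseK f) {p : ℝ × ℝ} (hp : p ∈ CrossingK f)
    {a : ℝ} (ha : a = p.1 ∨ a = p.2) (h0 : deriv f a 0 = 0) (h1 : deriv f a 1 = 0) : False := by
  apply hD p.1 p.2 hp.1 hp.2.1
  rcases ha with rfl | rfl <;> simp [cross2, h0, h1]

lemma quad_limit {f : ℝ → E3} (hf : IsLongKnot f) (hD : TransverseK f)
    {k : ℕ → (ℝ × ℝ) × (ℝ × ℝ)} {ε : ℕ → ℝ} {z : (ℝ × ℝ) × (ℝ × ℝ)}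
    (hk : Tendsto k atTop (𝓝 z)) (hε : Tendsto ε atTop (𝓝 0)) (hS : ∀ n, k n ∈ Sbar)
    (h1 : ∀ n, Cone (ε n) (f (k n).1.2 - f (k n).1.1))
    (h2 : ∀ n, Cone (ε n) (f (k n).2.2 - f (k n).2.1)) : z ∈ Kset f := by
  have t11 : Tendsto (fun n => (k n).1.1) atTop (𝓝 z.1.1) :=
    ((continuous_fst.comp continuous_fst).tendsto z).comp hk
  have t12 : Tendsto (fun n => (k n).1.2) atTop (𝓝 z.1.2) :=
    ((continuous_snd.comp continuous_fst).tendsto z).comp hk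
  have t21 : Tendsto (fun n => (k n).2.1) atTop (𝓝 z.2.1) :=
    ((continuous_fst.comp continuous_snd).tendsto z).comp hk
  have t22 : Tendsto (fun n => (k n).2.2) atTop (𝓝 z.2.2) :=
    ((continuous_snd.comp continuous_snd).tendsto z).comp hk
  have l1 : z.1.1 ≤ z.2.2 := le_of_tendsto_of_tendsto' t11 t22 fun n => (hS n).2.2.1
  have l2 : z.2.2 ≤ z.1.2 := le_of_tendsto_of_tendsto' t22 t12 fun n => (hS n).2.2.2.1
  have l3 : z.1.2 ≤ z.2.1 := le_of_tendsto_of_tendsto' t12 t21 fun n => (hS n).2.2.2.2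
  have A := pair_limit hf (Or.inl rfl) t11 t12 hε
    (fun n => by have := (hS n).1; linarith) h1
  have B := pair_limit hf (Or.inr rfl) t21 t22 hε
    (fun n => by have := (hS n).2.1; linarith) h2
  rcases A with A | ⟨a1, a2, a3, a4⟩
  · rcases B with B | ⟨b1, b2, b3, b4⟩
    · exact ⟨A, B, l1, l2, l3⟩
    · exact (vert_not_crossing hD A (Or.inr (by simp only; linarith)) b2 b3).elim
  · rcases B with B | ⟨b1, b2, b3, b4⟩
    · exact (vert_not_crossing hD B (Or.inr (by simp only; linarith)) a2 a3).elim
    · have : z.1.1 = z.2.1 := by linarith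
      rw [this] at a4
      linarith

lemma cone_bounded {f : ℝ → E3} (hf : IsLongKnot f) : ∃ R : ℝ, ∀ s t ε : ℝ, s ≠ t → ε ≤ 1 / 2 →
    Cone ε (f t - f s) → |s| ≤ R ∧ |t| ≤ R := by
  obtain ⟨M, hM⟩ := (isCompact_Icc (a := (-1 : ℝ)) (b := 1)).exists_bound_of_continuousOn
    hf.1.continuous.continuousOn
  have hM' : ∀ x : ℝ, |x| ≤ 1 → ‖f x‖ ≤ M := fun x hx => hM x (abs_le.mp hx)
  have hM0 : 0 ≤ M := (norm_nonneg _).trans (hM' 0 (by simp))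
  have hout : ∀ x : ℝ, 1 ≤ |x| → f x 2 = 0 ∧ |x| ≤ ‖f x‖ := by
    intro x hx
    rw [hf.2.2.2 x hx]
    refine ⟨rfl, ?_⟩
    have := PiLp.norm_apply_le (mk3 x 0 0) 0
    simpa using this
  have h2 : ∀ x : ℝ, |f x 2| ≤ ‖f x‖ := fun x => by
    have := PiLp.norm_apply_le (f x) 2
    simpa using this
  refine ⟨1 + 3 * M, fun s t ε hst hε hc => ?_⟩
  have hne : f t - f s ≠ 0 := fun h => hst (hf.2.1 (sub_eq_zero.mp h)).symm
  have hpos := norm_pos_iff.mpr hne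
  unfold Cone at hc
  have e2 : (f t - f s) 2 = f t 2 - f s 2 := rfl
  rw [e2] at hc
  have hc' : (1 / 2) * ‖f t - f s‖ ≤ f t 2 - f s 2 := by nlinarith
  rcases le_or_gt |s| 1 with h1 | h1 <;> rcases le_or_gt |t| 1 with h3 | h3
  · constructor <;> linarith
  · have a := hout t h3.le
    have b := hM' s h1
    have c := abs_le.mp (h2 s)
    have : ‖f t‖ ≤ ‖f t - f s‖ + ‖f s‖ := by simpa using norm_add_le (f t - f s) (f s)
    constructor <;> linarith
  · have a := hout s h1.le
    have b := hM' t h3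
    have c := abs_le.mp (h2 t)
    have : ‖f s‖ ≤ ‖f t - f s‖ + ‖f t‖ := by
      have := norm_add_le (f s - f t) (f t)
      rw [norm_sub_rev] at this
      simpa using this
    constructor <;> linarith
  · have a := hout s h1.le
    have b := hout t h3.le
    linarith

lemma cone_crossing {f : ℝ → E3} {p : ℝ × ℝ} (hp : p ∈ CrossingK f) {ε : ℝ} (hε : 0 ≤ ε) :
    Cone ε (f p.2 - f p.1) := by
  obtain ⟨_, h1, h2⟩ := hp
  simp only [pr12, Prod.mk.injEq, pr3] at h1 h2
  have h3 := nsq3 (f p.2 - f p.1)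
  have e0 : (f p.2 - f p.1) 0 = 0 := by simp [h1.1]
  have e1 : (f p.2 - f p.1) 1 = 0 := by simp [h1.2]
  have e2 : 0 < (f p.2 - f p.1) 2 := by simp [h2]
  rw [e0, e1] at h3
  have : ‖f p.2 - f p.1‖ = (f p.2 - f p.1) 2 := by
    rw [← sq_eq_sq₀ (norm_nonneg _) e2.le, h3]; ring
  unfold Cone
  rw [this]
  nlinarith

lemma Kset_sub_Sbar (f : ℝ → E3) : Kset f ⊆ Sbar := by
  rintro k ⟨h1, h2, h3, h4, h5⟩
  exact ⟨lt_of_le_of_ne (h3.trans h4) h1.1, lt_of_le_of_ne (h4.trans h5) h2.1.symm, h3, h4, h5⟩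

/-- Box of radius `R`. -/
lemma quad_bounded {f : ℝ → E3} (hf : IsLongKnot f) : ∃ R : ℝ, ∀ k ∈ Sbar, ∀ ε ≤ (1 / 2 : ℝ),
    Cone ε (f k.1.2 - f k.1.1) → Cone ε (f k.2.2 - f k.2.1) →
      k ∈ Metric.closedBall (0 : (ℝ × ℝ) × (ℝ × ℝ)) R := by
  obtain ⟨R, hR⟩ := cone_bounded hf
  refine ⟨R, fun k hk ε hε h1 h2 => ?_⟩
  have a := hR _ _ ε hk.1.ne hε h1
  have b := hR _ _ ε hk.2.1.ne' hε h2
  rw [mem_closedBall_zero_iff]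
  simp only [Prod.norm_def, Real.norm_eq_abs, max_le_iff]
  exact ⟨a, b⟩

lemma Kset_finite {f : ℝ → E3} (hf : IsLongKnot f) (hD : TransverseK f) : (Kset f).Finite := by
  by_contra hinf
  have hinf : (Kset f).Infinite := hinf
  set k := hinf.natEmbedding with hk
  obtain ⟨R, hR⟩ := quad_bounded hf
  have hmem : ∀ n, (k n : (ℝ × ℝ) × (ℝ × ℝ)) ∈ Kset f := fun n => (k n).2
  have c1 : ∀ n, Cone 0 (f (k n).1.1.2 - f (k n).1.1.1) := fun n =>
    cone_crossing (hmem n).1 le_rfl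
  have c2 : ∀ n, Cone 0 (f (k n).1.2.2 - f (k n).1.2.1) := fun n =>
    cone_crossing (hmem n).2.1 le_rfl
  obtain ⟨z, -, φ, hφ, hlim⟩ := (isCompact_closedBall (0 : (ℝ × ℝ) × (ℝ × ℝ)) R).tendsto_subseq
    (x := fun n => (k n : (ℝ × ℝ) × (ℝ × ℝ)))
    (fun n => hR _ (Kset_sub_Sbar f (hmem n)) 0 (by norm_num) (c1 n) (c2 n))
  have hz : z ∈ Kset f := quad_limit hf hD hlim tendsto_const_nhds
    (fun n => Kset_sub_Sbar f (hmem (φ n))) (fun n => c1 (φ n)) (fun n => c2 (φ n))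
  obtain ⟨δ, ⟨hd1, hd2⟩, hδ⟩ := (((local_lemma f hf hD z.1 hz.1).and
    (local_lemma f hf hD z.2 hz.2.1)).and self_mem_nhdsWithin).exists
  have hev : ∀ᶠ n in atTop, (k (φ n) : (ℝ × ℝ) × (ℝ × ℝ)) = z := by
    filter_upwards [hlim (Metric.ball_mem_nhds z hδ)] with n hn
    have hn : (k (φ n) : (ℝ × ℝ) × (ℝ × ℝ)) ∈ Metric.ball z δ := hn
    rw [Metric.mem_ball, Prod.dist_eq, max_lt_iff] at hn
    exact Prod.ext (hd1.1 _ hn.1 (hmem _).1.2.1) (hd2.1 _ hn.2 (hmem _).2.1.2.1)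
  obtain ⟨N, hN⟩ := eventually_atTop.mp hev
  have h := (hN N le_rfl).trans (hN (N + 1) (Nat.le_succ N)).symm
  have := hφ.injective (k.injective (Subtype.ext h))
  omega

lemma quad_near {f : ℝ → E3} (hf : IsLongKnot f) (hD : TransverseK f)
    {U : Set ((ℝ × ℝ) × (ℝ × ℝ))} (hU : IsOpen U) (hKU : Kset f ⊆ U) :
    ∀ᶠ ε in 𝓝[>] (0 : ℝ), ∀ k ∈ Sbar, Cone ε (f k.1.2 - f k.1.1) →
      Cone ε (f k.2.2 - f k.2.1) → k ∈ U := by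
  by_contra hcon
  have hex : ∀ n : ℕ, ∃ ε : ℝ, ∃ k : (ℝ × ℝ) × (ℝ × ℝ), (0 < ε ∧ ε < 1 / ((n : ℝ) + 2)) ∧ k ∈ Sbar ∧
      Cone ε (f k.1.2 - f k.1.1) ∧ Cone ε (f k.2.2 - f k.2.1) ∧ k ∉ U := by
    intro n
    have hpos : (0 : ℝ) < 1 / ((n : ℝ) + 2) := by positivity
    have hfr := (not_eventually.mp hcon).and_eventually (Ioo_mem_nhdsGT hpos)
    obtain ⟨ε, h1, h2⟩ := hfr.exists
    push Not at h1
    obtain ⟨k, a, b, c, d⟩ := h1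
    exact ⟨ε, k, h2, a, b, c, d⟩
  choose ε k hεk hS hc1 hc2 hnU using hex
  have hε : Tendsto ε atTop (𝓝 0) := by
    refine squeeze_zero (fun n => (hεk n).1.le) (fun n => (hεk n).2.le) ?_
    refine squeeze_zero (fun n => by positivity) (fun n => ?_) tendsto_one_div_add_atTop_nhds_zero_nat
    apply one_div_le_one_div_of_le <;> [positivity; linarith]
  obtain ⟨R, hR⟩ := quad_bounded hf
  obtain ⟨z, -, φ, hφ, hlim⟩ := (isCompact_closedBall (0 : (ℝ × ℝ) × (ℝ × ℝ)) R).tendsto_subseq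
    (x := k) (fun n => hR _ (hS n) (ε n) (by
      refine (hεk n).2.le.trans ?_
      apply one_div_le_one_div_of_le (by norm_num)
      have : (0 : ℝ) ≤ n := Nat.cast_nonneg n
      linarith) (hc1 n) (hc2 n))
  have hz : z ∈ Kset f := quad_limit hf hD hlim (hε.comp hφ.tendsto_atTop)
    (fun n => hS (φ n)) (fun n => hc1 (φ n)) (fun n => hc2 (φ n))
  obtain ⟨n, hn⟩ := (hlim.eventually (hU.mem_nhds (hKU hz))).exists
  exact hnU (φ n) hn

/-! ### Contribution of one pair of crossings to `I_X` -/

lemma half_integral {E : Type*} [NormedAddCommGroup E] [NormedSpace ℝ E] [MeasurableSpace E]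
    [BorelSpace E] [FiniteDimensional ℝ E] (μ : Measure E) [μ.IsAddHaarMeasure]
    (L : E →L[ℝ] ℝ) (hL : L ≠ 0) (k : E) (hk : L k = 0) (δ : ℝ) (G : E → ℝ)
    (hG : IntegrableOn G (Metric.ball k δ) μ)
    (hsym : ∀ z ∈ Metric.ball k δ, G (k + k - z) = G z) :
    ∫ z in Metric.ball k δ ∩ {z | L z < 0}, G z ∂μ = (1 / 2) * ∫ z in Metric.ball k δ, G z ∂μ := by
  have hm1 : MeasurableSet {z | L z < 0} := (isOpen_lt L.continuous continuous_const).measurableSet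
  have hm2 : MeasurableSet {z | 0 < L z} := (isOpen_lt continuous_const L.continuous).measurableSet
  have hmb : MeasurableSet (Metric.ball k δ) := Metric.isOpen_ball.measurableSet
  have hsplit := integral_inter_add_sdiff hm1 hG
  have hnull : μ {z | L z = 0} = 0 := by
    have hne : LinearMap.ker (L : E →ₗ[ℝ] ℝ) ≠ ⊤ := by
      intro h
      apply hL
      ext x
      have : x ∈ LinearMap.ker (L : E →ₗ[ℝ] ℝ) := h ▸ Submodule.mem_top
      simpa using this
    have := Measure.addHaar_submodule μ (LinearMap.ker (L : E →ₗ[ℝ] ℝ)) hne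
    exact this
  have hae : (Metric.ball k δ \ {z | L z < 0} : Set E) =ᵐ[μ]
      (Metric.ball k δ ∩ {z | 0 < L z} : Set E) := by
    have h0 : ∀ᵐ z ∂μ, L z ≠ 0 := by
      rw [ae_iff]; simpa using hnull
    filter_upwards [h0] with z hz
    apply propext
    change (z ∈ Metric.ball k δ ∧ ¬ (L z < 0)) ↔ (z ∈ Metric.ball k δ ∧ 0 < L z)
    constructor
    · rintro ⟨a, b⟩; exact ⟨a, lt_of_le_of_ne (not_lt.mp b) hz.symm⟩
    · rintro ⟨a, b⟩; exact ⟨a, not_lt.mpr b.le⟩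
  have hball : ∀ z, k + k - z ∈ Metric.ball k δ ↔ z ∈ Metric.ball k δ := by
    intro z
    rw [mem_ball_iff_norm, mem_ball_iff_norm, ← norm_neg]
    have : -(k + k - z - k) = z - k := by abel
    rw [this]
  have hrefl : ∫ z in Metric.ball k δ ∩ {z | 0 < L z}, G z ∂μ =
      ∫ z in Metric.ball k δ ∩ {z | L z < 0}, G z ∂μ := by
    rw [← integral_indicator (hmb.inter hm2), ← integral_indicator (hmb.inter hm1),
      ← integral_sub_left_eq_self _ μ (k + k)]
    congr 1
    funext z
    by_cases hz : z ∈ Metric.ball k δ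
    · by_cases hl : L z < 0
      · have hm : z ∈ Metric.ball k δ ∩ {z | L z < 0} := ⟨hz, hl⟩
        rw [indicator_of_mem, indicator_of_mem hm, hsym z hz]
        refine ⟨(hball z).mpr hz, ?_⟩
        change 0 < L (k + k - z)
        simp [hk, hl]
      · rw [indicator_of_notMem, indicator_of_notMem]
        · exact fun h => hl h.2
        · intro h
          have : 0 < L (k + k - z) := h.2
          simp [hk] at this
          exact hl this
    · rw [indicator_of_notMem, indicator_of_notMem]
      · exact fun h => hz h.1
      · exact fun h => hz ((hball z).mp h.1)
  rw [setIntegral_congr_set hae, hrefl] at hsplit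
  linarith

/-- `f` is straight and horizontal on the interval of radius `δ` around `t`. -/
def StrAt (f : ℝ → E3) (t δ : ℝ) : Prop :=
  ∃ w : E3, w 2 = 0 ∧ ∀ s : ℝ, |s - t| < δ → f s = f t + (s - t) • w

lemma str_ev {f : ℝ → E3} (hS : StraightNearMultipleK f) {t u v : ℝ} (h1 : t ≠ u) (h2 : u ≠ v)
    (h3 : t ≠ v) (e1 : pr12 (f t) = pr12 (f u)) (e2 : pr12 (f u) = pr12 (f v)) :
    ∀ᶠ δ in 𝓝[>] (0 : ℝ), StrAt f t δ := by
  obtain ⟨δ, hδ, w, hw, h⟩ := hS t u v h1 h2 h3 e1 e2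
  filter_upwards [Ioo_mem_nhdsGT hδ] with δ' hδ'
  exact ⟨w, hw, fun s hs => h s (hs.trans hδ'.2)⟩

lemma StrAt.deriv {f : ℝ → E3} {t δ : ℝ} {w : E3}
    (h : ∀ s : ℝ, |s - t| < δ → f s = f t + (s - t) • w) {s : ℝ} (hs : |s - t| < δ) :
    deriv f s = w := by
  have : f =ᶠ[𝓝 s] fun s => f t + (s - t) • w := by
    have ho : IsOpen {s : ℝ | |s - t| < δ} :=
      isOpen_lt (by fun_prop) continuous_const
    filter_upwards [ho.mem_nhds hs] with x hx using h x hx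
  rw [this.deriv_eq]
  have h1 : HasDerivAt (fun s : ℝ => f t + (s - t) • w) ((1 : ℝ) • w) s :=
    (((hasDerivAt_id s).sub_const t).smul_const w).const_add (f t)
  rw [h1.deriv, one_smul]

lemma Fk_symm {f : ℝ → E3} (hf : IsLongKnot f) {p0 : ℝ × ℝ} (hp : p0 ∈ CrossingK f) {δ : ℝ}
    (h1 : StrAt f p0.1 δ) (h2 : StrAt f p0.2 δ) {ε : ℝ} {g : E3 → ℝ} (hg : IsEtaForm ε g)
    {p : ℝ × ℝ} (hpb : p ∈ Metric.ball p0 δ) : Fk f g (p0 + p0 - p) = Fk f g p := by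
  obtain ⟨w1, hw1, h1⟩ := h1
  obtain ⟨w2, hw2, h2⟩ := h2
  obtain ⟨_, hq, hz⟩ := hp
  simp only [pr12, Prod.mk.injEq, pr3] at hq hz
  rw [Metric.mem_ball, Prod.dist_eq, max_lt_iff, Real.dist_eq, Real.dist_eq] at hpb
  have q1 : |(p0 + p0 - p).1 - p0.1| < δ := by
    have : (p0 + p0 - p).1 - p0.1 = -(p.1 - p0.1) := by
      simp only [Prod.fst_sub, Prod.fst_add]; ring
    rw [this, abs_neg]; exact hpb.1
  have q2 : |(p0 + p0 - p).2 - p0.2| < δ := by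
    have : (p0 + p0 - p).2 - p0.2 = -(p.2 - p0.2) := by
      simp only [Prod.snd_sub, Prod.snd_add]; ring
    rw [this, abs_neg]; exact hpb.2
  have e : f (p0 + p0 - p).2 - f (p0 + p0 - p).1 = rot (f p.2 - f p.1) := by
    rw [h1 _ q1, h2 _ q2, h1 _ hpb.1, h2 _ hpb.2]
    apply ext3
    · simp [rot, hq.1]; ring
    · simp [rot, hq.2]; ring
    · simp [rot, hw1, hw2]
  have hne : f p.2 - f p.1 ≠ 0 := by
    intro h
    have : (f p.2 - f p.1) 2 = 0 := by rw [h]; rfl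
    rw [h1 _ hpb.1, h2 _ hpb.2] at this
    simp [hw1, hw2] at this
    linarith
  unfold Fk
  rw [e, unitv_rot, g_rot hg (norm_unitv hne), norm_rot, StrAt.deriv h1 q1, StrAt.deriv h2 q2,
    StrAt.deriv h1 hpb.1, StrAt.deriv h2 hpb.2]
  congr 2
  simp [det3, rot, hw1, hw2]

/-- The integrand of `I_X` in split coordinates. -/
def GX (f : ℝ → E3) (g : E3 → ℝ) (z : (ℝ × ℝ) × (ℝ × ℝ)) : ℝ := Fk f g z.1 * Fk f g z.2

/-- The domain of `I_X` in split coordinates. -/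
def SX : Set ((ℝ × ℝ) × (ℝ × ℝ)) := {z | z.1.1 < z.2.2 ∧ z.2.2 < z.1.2 ∧ z.1.2 < z.2.1}

lemma SX_open : IsOpen SX := by
  have o1 : IsOpen {z : (ℝ × ℝ) × (ℝ × ℝ) | z.1.1 < z.2.2} := isOpen_lt (by fun_prop) (by fun_prop)
  have o2 : IsOpen {z : (ℝ × ℝ) × (ℝ × ℝ) | z.2.2 < z.1.2} := isOpen_lt (by fun_prop) (by fun_prop)
  have o3 : IsOpen {z : (ℝ × ℝ) × (ℝ × ℝ) | z.1.2 < z.2.1} := isOpen_lt (by fun_prop) (by fun_prop)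
  exact o1.inter (o2.inter o3)

open Classical in
/-- The weight of a pair of crossings. -/
def wt (k : (ℝ × ℝ) × (ℝ × ℝ)) : ℝ := if k ∈ SX then 1 else 1 / 2

lemma piece_ball (f : ℝ → E3) (hf : IsLongKnot f) (hD : TransverseK f)
    (k : (ℝ × ℝ) × (ℝ × ℝ)) (hk : k ∈ Kset f) :
    ∀ᶠ δ in 𝓝[>] (0 : ℝ), ∀ᶠ ε in 𝓝[>] (0 : ℝ), ∀ g, IsEtaForm ε g →
      IntegrableOn (GX f g) (Metric.ball k δ) ∧
        ∫ z in Metric.ball k δ, GX f g z = csignK f k.1 * csignK f k.2 := by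
  filter_upwards [local_lemma f hf hD k.1 hk.1, local_lemma f hf hD k.2 hk.2.1] with δ h1 h2
  filter_upwards [h1.2, h2.2] with ε h3 h4 g hg
  have a := h3 g hg
  have b := h4 g hg
  have hb : Metric.ball k δ = Metric.ball k.1 δ ×ˢ Metric.ball k.2 δ := (ball_prod_same _ _ _).symm
  rw [hb]
  constructor
  · unfold IntegrableOn
    rw [Measure.volume_eq_prod, ← Measure.prod_restrict]
    exact Integrable.mul_prod a.1 b.1
  · have := setIntegral_prod_mul (μ := volume) (ν := volume) (Fk f g) (Fk f g)
      (Metric.ball k.1 δ) (Metric.ball k.2 δ)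
    rw [a.2, b.2] at this
    exact this

/-- A boundary point of `SX` in `Kset`. -/
lemma boundary_cases {f : ℝ → E3} {k : (ℝ × ℝ) × (ℝ × ℝ)} (hk : k ∈ Kset f) (hkS : k ∉ SX) :
    (k.1.1 = k.2.2 ∧ k.2.2 < k.1.2 ∧ k.1.2 < k.2.1) ∨
    (k.1.1 < k.2.2 ∧ k.2.2 = k.1.2 ∧ k.1.2 < k.2.1) ∨
    (k.1.1 < k.2.2 ∧ k.2.2 < k.1.2 ∧ k.1.2 = k.2.1) := by
  obtain ⟨⟨h1, h2, h3⟩, ⟨h4, h5, h6⟩, h7, h8, h9⟩ := hk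
  rcases h7.lt_or_eq with a | a <;> rcases h8.lt_or_eq with b | b <;> rcases h9.lt_or_eq with c | c
  · exact absurd ⟨a, b, c⟩ hkS
  · exact Or.inr (Or.inr ⟨a, b, c⟩)
  · exact Or.inr (Or.inl ⟨a, b, c⟩)
  · exact absurd (b.trans c).symm h4
  · exact Or.inl ⟨a, b, c⟩
  · rw [a, c] at h3; exact absurd h3 (not_lt.mpr h6.le)
  · exact absurd (a.trans b) h1
  · exact absurd (a.trans b) h1

lemma boundary_str {f : ℝ → E3} (hS : StraightNearMultipleK f)
    {k : (ℝ × ℝ) × (ℝ × ℝ)} (hk : k ∈ Kset f) (hkS : k ∉ SX) :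
    ∀ᶠ δ in 𝓝[>] (0 : ℝ), StrAt f k.1.1 δ ∧ StrAt f k.1.2 δ ∧ StrAt f k.2.1 δ ∧
      StrAt f k.2.2 δ := by
  have key : ∀ a b c : ℝ, a < b → b < c → pr12 (f a) = pr12 (f b) → pr12 (f b) = pr12 (f c) →
      ∀ᶠ δ in 𝓝[>] (0 : ℝ), StrAt f a δ ∧ StrAt f b δ ∧ StrAt f c δ := by
    intro a b c hab hbc e1 e2
    have hac := hab.trans hbc
    exact (str_ev hS hab.ne hbc.ne hac.ne e1 e2).and
      ((str_ev hS hbc.ne hac.ne' hab.ne' e2 (e1.trans e2).symm).and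
        (str_ev hS hac.ne' hab.ne hbc.ne' (e1.trans e2).symm e1))
  have p1 := hk.1.2.1
  have p2 := hk.2.1.2.1
  rcases boundary_cases hk hkS with ⟨a, b, c⟩ | ⟨a, b, c⟩ | ⟨a, b, c⟩
  · filter_upwards [key k.1.1 k.1.2 k.2.1 (a ▸ b) c p1 (by rw [p2, ← a, p1])] with δ h
    exact ⟨h.1, h.2.1, h.2.2, a ▸ h.1⟩
  · filter_upwards [key k.1.1 k.1.2 k.2.1 (b ▸ a) c p1 (by rw [p2, ← b])] with δ h
    exact ⟨h.1, h.2.1, h.2.2, b.symm ▸ h.2.1⟩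
  · filter_upwards [key k.1.1 k.2.2 k.1.2 a b (by rw [p1, c, p2]) (by rw [← p2, c])] with δ h
    exact ⟨h.1, h.2.2, c ▸ h.2.2, h.2.1⟩

lemma ev_ball {E : Type*} [PseudoMetricSpace E] {U : Set E} (hU : IsOpen U) {k : E} (hk : k ∈ U) :
    ∀ᶠ δ in 𝓝[>] (0 : ℝ), Metric.ball k δ ⊆ U := by
  obtain ⟨r, hr, h⟩ := Metric.isOpen_iff.mp hU k hk
  filter_upwards [Ioo_mem_nhdsGT hr] with δ hδ
  exact (Metric.ball_subset_ball hδ.2.le).trans h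

lemma boundary_half {f : ℝ → E3} {k : (ℝ × ℝ) × (ℝ × ℝ)} (hk : k ∈ Kset f) (hkS : k ∉ SX) :
    ∃ L : ((ℝ × ℝ) × (ℝ × ℝ)) →L[ℝ] ℝ, L ≠ 0 ∧ L k = 0 ∧
      ∀ᶠ δ in 𝓝[>] (0 : ℝ), SX ∩ Metric.ball k δ = Metric.ball k δ ∩ {z | L z < 0} := by
  set l11 := (ContinuousLinearMap.fst ℝ ℝ ℝ).comp (ContinuousLinearMap.fst ℝ (ℝ × ℝ) (ℝ × ℝ))
  set l12 := (ContinuousLinearMap.snd ℝ ℝ ℝ).comp (ContinuousLinearMap.fst ℝ (ℝ × ℝ) (ℝ × ℝ))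
  set l21 := (ContinuousLinearMap.fst ℝ ℝ ℝ).comp (ContinuousLinearMap.snd ℝ (ℝ × ℝ) (ℝ × ℝ))
  set l22 := (ContinuousLinearMap.snd ℝ ℝ ℝ).comp (ContinuousLinearMap.snd ℝ (ℝ × ℝ) (ℝ × ℝ))
  have o1 : IsOpen {z : (ℝ × ℝ) × (ℝ × ℝ) | z.1.1 < z.2.2} := isOpen_lt (by fun_prop) (by fun_prop)
  have o2 : IsOpen {z : (ℝ × ℝ) × (ℝ × ℝ) | z.2.2 < z.1.2} := isOpen_lt (by fun_prop) (by fun_prop)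
  have o3 : IsOpen {z : (ℝ × ℝ) × (ℝ × ℝ) | z.1.2 < z.2.1} := isOpen_lt (by fun_prop) (by fun_prop)
  rcases boundary_cases hk hkS with ⟨a, b, c⟩ | ⟨a, b, c⟩ | ⟨a, b, c⟩
  · refine ⟨l11 - l22, ?_, ?_, ?_⟩
    · intro h
      have := congrArg (fun L => L ((1, 0), (0, 0))) h
      simp [l11, l22] at this
    · change k.1.1 - k.2.2 = 0
      linarith
    · filter_upwards [ev_ball o2 b, ev_ball o3 c] with δ h1 h2
      ext z
      change ((z.1.1 < z.2.2 ∧ z.2.2 < z.1.2 ∧ z.1.2 < z.2.1) ∧ z ∈ Metric.ball k δ) ↔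
        (z ∈ Metric.ball k δ ∧ z.1.1 - z.2.2 < 0)
      constructor
      · rintro ⟨⟨x, _, _⟩, y⟩; exact ⟨y, by linarith⟩
      · rintro ⟨y, x⟩; exact ⟨⟨by linarith, h1 y, h2 y⟩, y⟩
  · refine ⟨l22 - l12, ?_, ?_, ?_⟩
    · intro h
      have := congrArg (fun L => L ((0, 0), (0, 1))) h
      simp [l12, l22] at this
    · change k.2.2 - k.1.2 = 0
      linarith
    · filter_upwards [ev_ball o1 a, ev_ball o3 c] with δ h1 h2
      ext z
      change ((z.1.1 < z.2.2 ∧ z.2.2 < z.1.2 ∧ z.1.2 < z.2.1) ∧ z ∈ Metric.ball k δ) ↔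
        (z ∈ Metric.ball k δ ∧ z.2.2 - z.1.2 < 0)
      constructor
      · rintro ⟨⟨_, x, _⟩, y⟩; exact ⟨y, by linarith⟩
      · rintro ⟨y, x⟩; exact ⟨⟨h1 y, by linarith, h2 y⟩, y⟩
  · refine ⟨l12 - l21, ?_, ?_, ?_⟩
    · intro h
      have := congrArg (fun L => L ((0, 1), (0, 0))) h
      simp [l12, l21] at this
    · change k.1.2 - k.2.1 = 0
      linarith
    · filter_upwards [ev_ball o1 a, ev_ball o2 b] with δ h1 h2
      ext z
      change ((z.1.1 < z.2.2 ∧ z.2.2 < z.1.2 ∧ z.1.2 < z.2.1) ∧ z ∈ Metric.ball k δ) ↔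
        (z ∈ Metric.ball k δ ∧ z.1.2 - z.2.1 < 0)
      constructor
      · rintro ⟨⟨_, _, x⟩, y⟩; exact ⟨y, by linarith⟩
      · rintro ⟨y, x⟩; exact ⟨⟨h1 y, h2 y, by linarith⟩, y⟩

lemma piece (f : ℝ → E3) (hf : IsLongKnot f) (hD : TransverseK f) (hS : StraightNearMultipleK f)
    (k : (ℝ × ℝ) × (ℝ × ℝ)) (hk : k ∈ Kset f) :
    ∀ᶠ δ in 𝓝[>] (0 : ℝ), ∀ᶠ ε in 𝓝[>] (0 : ℝ), ∀ g, IsEtaForm ε g →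
      IntegrableOn (GX f g) (Metric.ball k δ) ∧
        ∫ z in SX ∩ Metric.ball k δ, GX f g z = wt k * (csignK f k.1 * csignK f k.2) := by
  by_cases hkS : k ∈ SX
  · filter_upwards [piece_ball f hf hD k hk, ev_ball SX_open hkS] with δ h1 h2
    filter_upwards [h1] with ε h3 g hg
    refine ⟨(h3 g hg).1, ?_⟩
    rw [inter_eq_right.mpr h2, (h3 g hg).2, wt, if_pos hkS, one_mul]
  · obtain ⟨L, hL0, hLk, hL⟩ := boundary_half hk hkS
    filter_upwards [piece_ball f hf hD k hk, hL, boundary_str hS hk hkS] with δ h1 h2 h4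
    filter_upwards [h1] with ε h3 g hg
    refine ⟨(h3 g hg).1, ?_⟩
    haveI i1 : (volume : Measure (ℝ × ℝ)).IsAddHaarMeasure :=
      inferInstanceAs ((volume : Measure ℝ).prod (volume : Measure ℝ)).IsAddHaarMeasure
    haveI i2 : (volume : Measure ((ℝ × ℝ) × (ℝ × ℝ))).IsAddHaarMeasure :=
      inferInstanceAs ((volume : Measure (ℝ × ℝ)).prod (volume : Measure (ℝ × ℝ))).IsAddHaarMeasure
    rw [h2, half_integral volume L hL0 k hLk δ (GX f g) (h3 g hg).1, (h3 g hg).2, wt, if_neg hkS]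
    intro z hz
    rw [Metric.mem_ball, Prod.dist_eq, max_lt_iff] at hz
    have e1 := Fk_symm hf hk.1 h4.1 h4.2.1 hg (p := z.1) hz.1
    have e2 := Fk_symm hf hk.2.1 h4.2.2.1 h4.2.2.2 hg (p := z.2) hz.2
    unfold GX
    rw [← e1, ← e2]
    rfl

/-! ### Assembling `I_X` -/

lemma IX_eq (f : ℝ → E3) (hf : IsLongKnot f) (g : E3 → ℝ) : IX f g = ∫ z in SX, GX f g z := by
  unfold IX
  rw [← mp_eq4.setIntegral_preimage_emb eq4.measurableEmbedding]
  have hpre : eq4 ⁻¹' CX = SX := rfl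
  rw [hpre]
  refine setIntegral_congr_fun SX_open.measurableSet fun z hz => ?_
  have := omegaX_eq f hf g (eq4 z) hz
  exact this

lemma cone_of_Fk {f : ℝ → E3} (hf : IsLongKnot f) {ε : ℝ} {g : E3 → ℝ} (hg : IsEtaForm ε g)
    {p : ℝ × ℝ} (hp : p.1 ≠ p.2) (h : Fk f g p ≠ 0) : Cone ε (f p.2 - f p.1) := by
  have hne : f p.2 - f p.1 ≠ 0 := fun h => hp (hf.2.1 (sub_eq_zero.mp h)).symm
  refine cone_of_g hg hne fun h0 => h ?_
  simp [Fk, h0]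

lemma exists_delta (f : ℝ → E3) (hf : IsLongKnot f) (hD : TransverseK f)
    (hS : StraightNearMultipleK f) :
    ∃ δ > (0 : ℝ), (Kset f).PairwiseDisjoint (fun k => Metric.ball k δ) ∧
      (∀ k ∈ Kset f, ∀ᶠ ε in 𝓝[>] (0 : ℝ), ∀ g, IsEtaForm ε g →
        IntegrableOn (GX f g) (Metric.ball k δ) ∧
        ∫ z in SX ∩ Metric.ball k δ, GX f g z = wt k * (csignK f k.1 * csignK f k.2)) ∧
      (∀ k ∈ Kset f, k ∉ SX → StrAt f k.1.1 δ ∧ StrAt f k.1.2 δ ∧ StrAt f k.2.1 δ ∧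
        StrAt f k.2.2 δ) ∧
      (∀ k ∈ Kset f, Metric.ball k δ ⊆ {z | z.1.1 < z.1.2 ∧ z.2.2 < z.2.1}) := by
  have hfin := Kset_finite hf hD
  have e1 : ∀ᶠ δ in 𝓝[>] (0 : ℝ), ∀ k ∈ Kset f, ∀ k' ∈ Kset f, k ≠ k' →
      Disjoint (Metric.ball k δ) (Metric.ball k' δ) := by
    rw [eventually_all_finite hfin]
    intro k hk
    rw [eventually_all_finite hfin]
    intro k' hk'
    by_cases h : k = k'
    · exact Eventually.of_forall fun δ hne => absurd h hne
    · have hpos : 0 < dist k k' / 2 := by have := dist_pos.mpr h; linarith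
      filter_upwards [Ioo_mem_nhdsGT hpos] with δ hδ _
      apply Metric.ball_disjoint_ball
      have := hδ.2; linarith
  have e2 := (eventually_all_finite hfin).mpr fun k hk => piece f hf hD hS k hk
  have e3 : ∀ᶠ δ in 𝓝[>] (0 : ℝ), ∀ k ∈ Kset f, k ∉ SX → StrAt f k.1.1 δ ∧ StrAt f k.1.2 δ ∧
      StrAt f k.2.1 δ ∧ StrAt f k.2.2 δ := by
    rw [eventually_all_finite hfin]
    intro k hk
    by_cases h : k ∈ SX
    · exact Eventually.of_forall fun δ hne => absurd h hne
    · filter_upwards [boundary_str hS hk h] with δ hδ _ using hδ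
  have e4 : ∀ᶠ δ in 𝓝[>] (0 : ℝ), ∀ k ∈ Kset f,
      Metric.ball k δ ⊆ {z | z.1.1 < z.1.2 ∧ z.2.2 < z.2.1} := by
    rw [eventually_all_finite hfin]
    intro k hk
    have o1 : IsOpen {z : (ℝ × ℝ) × (ℝ × ℝ) | z.1.1 < z.1.2} :=
      isOpen_lt (by fun_prop) (by fun_prop)
    have o2 : IsOpen {z : (ℝ × ℝ) × (ℝ × ℝ) | z.2.2 < z.2.1} :=
      isOpen_lt (by fun_prop) (by fun_prop)
    have hb := Kset_sub_Sbar f hk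
    exact ev_ball (o1.inter o2) ⟨hb.1, hb.2.1⟩
  obtain ⟨δ, ⟨⟨⟨h1, h2⟩, h3⟩, h5⟩, h4⟩ :=
    ((((e1.and e2).and e3).and e4).and self_mem_nhdsWithin).exists
  exact ⟨δ, h4, fun k hk k' hk' hne => h1 k hk k' hk' hne, h2, h3, h5⟩

lemma SX_sub_Sbar : SX ⊆ Sbar := by
  rintro z ⟨h1, h2, h3⟩
  exact ⟨h1.trans h2, h2.trans h3, h1.le, h2.le, h3.le⟩

lemma IX_sum (f : ℝ → E3) (hf : IsLongKnot f) (hD : TransverseK f)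
    (hS : StraightNearMultipleK f) :
    ∀ᶠ ε in 𝓝[>] (0 : ℝ), ∀ g, IsEtaForm ε g →
      IX f g = ∑ᶠ k ∈ Kset f, wt k * (csignK f k.1 * csignK f k.2) := by
  obtain ⟨δ, hδ, hdisj, hpiece, -, -⟩ := exists_delta f hf hD hS
  have hfin := Kset_finite hf hD
  set U : Set ((ℝ × ℝ) × (ℝ × ℝ)) := ⋃ k ∈ Kset f, Metric.ball k δ with hU
  have hUo : IsOpen U := isOpen_biUnion fun k _ => Metric.isOpen_ball
  have hKU : Kset f ⊆ U := fun k hk => mem_biUnion hk (Metric.mem_ball_self hδ)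
  filter_upwards [quad_near hf hD hUo hKU, (eventually_all_finite hfin).mpr hpiece] with ε h1 h2 g hg
  rw [IX_eq f hf g, finsum_mem_eq_finite_toFinset_sum _ hfin]
  have hms : MeasurableSet SX := SX_open.measurableSet
  have hsub : ∫ z in SX, GX f g z = ∫ z in ⋃ k ∈ hfin.toFinset, SX ∩ Metric.ball k δ, GX f g z := by
    apply setIntegral_eq_of_subset_of_forall_sdiff_eq_zero hms
    · exact iUnion₂_subset fun k _ => inter_subset_left
    · rintro z ⟨hz, hn⟩
      by_contra hne
      apply hn
      have a1 : Fk f g z.1 ≠ 0 := left_ne_zero_of_mul hne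
      have a2 : Fk f g z.2 ≠ 0 := right_ne_zero_of_mul hne
      have hb := SX_sub_Sbar hz
      have := h1 z hb (cone_of_Fk hf hg hb.1.ne a1) (cone_of_Fk hf hg hb.2.1.ne' a2)
      obtain ⟨k, hk, hzk⟩ := mem_iUnion₂.mp this
      exact mem_iUnion₂.mpr ⟨k, hfin.mem_toFinset.mpr hk, hz, hzk⟩
  rw [hsub, integral_biUnion_finset]
  · refine Finset.sum_congr rfl fun k hk => ?_
    exact (h2 k (hfin.mem_toFinset.mp hk) g hg).2
  · exact fun k _ => hms.inter Metric.isOpen_ball.measurableSet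
  · intro k hk k' hk' hne
    exact (hdisj (by simpa using hk) (by simpa using hk') hne).mono inter_subset_right inter_subset_right
  · exact fun k hk => ((h2 k (hfin.mem_toFinset.mp hk) g hg).1).mono_set inter_subset_right

lemma sum_eq (f : ℝ → E3) (hf : IsLongKnot f) (hD : TransverseK f) :
    ∑ᶠ k ∈ Kset f, wt k * (csignK f k.1 * csignK f k.2) =
      pairXK f + (1 / 2) * (pairX1K f + pairX2K f + pairX3K f) := by
  have hfin := Kset_finite hf hD
  set A0 := {q : (ℝ × ℝ) × (ℝ × ℝ) | q.1 ∈ CrossingK f ∧ q.2 ∈ CrossingK f ∧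
    (q.1.1 < q.2.2 ∧ q.2.2 < q.1.2 ∧ q.1.2 < q.2.1)} with hA0
  set A1 := {q : (ℝ × ℝ) × (ℝ × ℝ) | q.1 ∈ CrossingK f ∧ q.2 ∈ CrossingK f ∧
    (q.2.2 = q.1.1 ∧ q.1.1 < q.1.2 ∧ q.1.2 < q.2.1)} with hA1
  set A2 := {q : (ℝ × ℝ) × (ℝ × ℝ) | q.1 ∈ CrossingK f ∧ q.2 ∈ CrossingK f ∧
    (q.2.2 = q.1.2 ∧ q.1.1 < q.1.2 ∧ q.1.2 < q.2.1)} with hA2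
  set A3 := {q : (ℝ × ℝ) × (ℝ × ℝ) | q.1 ∈ CrossingK f ∧ q.2 ∈ CrossingK f ∧
    (q.1.2 = q.2.1 ∧ q.1.1 < q.2.2 ∧ q.2.2 < q.1.2)} with hA3
  have hK : Kset f = A0 ∪ (A1 ∪ (A2 ∪ A3)) := by
    ext k
    constructor
    · intro hk
      by_cases hkS : k ∈ SX
      · exact Or.inl ⟨hk.1, hk.2.1, hkS⟩
      · rcases boundary_cases hk hkS with ⟨a, b, c⟩ | ⟨a, b, c⟩ | ⟨a, b, c⟩
        · exact Or.inr (Or.inl ⟨hk.1, hk.2.1, a.symm, a ▸ b, c⟩)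
        · exact Or.inr (Or.inr (Or.inl ⟨hk.1, hk.2.1, b, b ▸ a, c⟩))
        · exact Or.inr (Or.inr (Or.inr ⟨hk.1, hk.2.1, c, a, b⟩))
    · rintro (⟨h1, h2, a, b, c⟩ | ⟨h1, h2, a, b, c⟩ | ⟨h1, h2, a, b, c⟩ | ⟨h1, h2, a, b, c⟩) <;>
        exact ⟨h1, h2, by linarith, by linarith, by linarith⟩
  have f0 : A0.Finite := hfin.subset (hK ▸ subset_union_left)
  have f123 : (A1 ∪ (A2 ∪ A3)).Finite := hfin.subset (hK ▸ subset_union_right)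
  have f1 : A1.Finite := f123.subset subset_union_left
  have f23 : (A2 ∪ A3).Finite := f123.subset subset_union_right
  have f2 : A2.Finite := f23.subset subset_union_left
  have f3 : A3.Finite := f23.subset subset_union_right
  have d0 : Disjoint A0 (A1 ∪ (A2 ∪ A3)) := by
    rw [Set.disjoint_left]
    rintro k ⟨_, _, a, b, c⟩ (⟨_, _, a', b', c'⟩ | ⟨_, _, a', b', c'⟩ | ⟨_, _, a', b', c'⟩) <;> linarith
  have d1 : Disjoint A1 (A2 ∪ A3) := by
    rw [Set.disjoint_left]
    rintro k ⟨_, _, a, b, c⟩ (⟨_, _, a', b', c'⟩ | ⟨_, _, a', b', c'⟩) <;> linarith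
  have d2 : Disjoint A2 A3 := by
    rw [Set.disjoint_left]
    rintro k ⟨_, _, a, b, c⟩ ⟨_, _, a', b', c'⟩; linarith
  rw [hK, finsum_mem_union d0 f0 f123, finsum_mem_union d1 f1 f23, finsum_mem_union d2 f2 f3]
  have w0 : ∑ᶠ k ∈ A0, wt k * (csignK f k.1 * csignK f k.2) = pairXK f := by
    refine finsum_mem_congr rfl fun k hk => ?_
    rw [wt, if_pos (show k ∈ SX from hk.2.2), one_mul]
  have whalf : ∀ A : Set ((ℝ × ℝ) × (ℝ × ℝ)), A.Finite → (∀ k ∈ A, k ∉ SX) →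
      ∑ᶠ k ∈ A, wt k * (csignK f k.1 * csignK f k.2) =
        (1 / 2) * ∑ᶠ k ∈ A, csignK f k.1 * csignK f k.2 := by
    intro A _ h
    rw [mul_finsum_mem]
    refine finsum_mem_congr rfl fun k hk => ?_
    rw [wt, if_neg (h k hk)]
  rw [w0, whalf A1 f1, whalf A2 f2, whalf A3 f3]
  · change _ = pairXK f + 1 / 2 * ((∑ᶠ k ∈ A1, csignK f k.1 * csignK f k.2) +
      (∑ᶠ k ∈ A2, csignK f k.1 * csignK f k.2) + ∑ᶠ k ∈ A3, csignK f k.1 * csignK f k.2)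
    ring
  all_goals
    rintro k ⟨_, _, a, b, c⟩ ⟨a', b', c'⟩
    linarith

/-! ### Vanishing of `I_Y` -/

/-- The signs of the reflection. -/
def sg (i : Fin 6) : ℝ := if i = 5 then 1 else -1

/-- The linear part of the reflection. -/
def TY : E6 ≃ₗᵢ[ℝ] E6 :=
  LinearIsometryEquiv.piLpCongrRight 2
    (fun i : Fin 6 => if i = 5 then LinearIsometryEquiv.refl ℝ ℝ else LinearIsometryEquiv.neg ℝ)

lemma TY_apply (x : E6) (i : Fin 6) : TY x i = sg i * x i := by
  unfold TY sg
  rw [LinearIsometryEquiv.piLpCongrRight_apply]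
  split_ifs with h <;> simp [h]

/-- The reflection. -/
def PhiY (v x : E6) : E6 := v + TY x

lemma PhiY_mp (v : E6) : MeasurePreserving (PhiY v) volume volume :=
  (measurePreserving_add_left volume v).comp TY.measurePreserving

lemma PhiY_emb (v : E6) : MeasurableEmbedding (PhiY v) :=
  (measurableEmbedding_addLeft v).comp TY.toHomeomorph.measurableEmbedding

/-- `ptY` as a linear map. -/
def ptL : E6 →L[ℝ] E3 :=
  LinearMap.toContinuousLinearMap
    { toFun := ptY
      map_add' := fun x y => by apply ext3 <;> simp [ptY]
      map_smul' := fun c x => by apply ext3 <;> simp [ptY] }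

lemma ptL_apply (x : E6) : ptL x = ptY x := rfl

lemma hasFDerivAt_ptY (x : E6) : HasFDerivAt ptY ptL x := ptL.hasFDerivAt

lemma det3_rot (a b c : E3) : det3 (rot a) (rot b) (rot c) = det3 a b c := by
  simp [det3, rot]; ring

lemma form2_refl {ε : ℝ} {g : E3 → ℝ} (hg : IsEtaForm ε g) {D : E6 → E3} {x y : E6}
    (h1 : DifferentiableAt ℝ D x) (h2 : DifferentiableAt ℝ D y) (h0 : D x ≠ 0)
    (hD : D y = rot (D x)) (hp : ∀ i, pdv D i y = sg i • rot (pdv D i x)) (i j : Fin 6) :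
    form2 g (fun z => unitv (D z)) y i j = sg i * sg j * form2 g (fun z => unitv (D z)) x i j := by
  have h0y : D y ≠ 0 := by
    rw [hD, ← norm_ne_zero_iff, norm_rot]; exact norm_ne_zero_iff.mpr h0
  rw [form2_unitv g D y h2 h0y, form2_unitv g D x h1 h0, hp, hp, hD, unitv_rot,
    g_rot hg (norm_unitv h0), norm_rot, ← det3_rot (D x)]
  simp only [det3, PiLp.smul_apply, smul_eq_mul]
  ring

lemma prod_sg : ∏ i, sg i = -1 := by
  simp [Fin.prod_univ_succ, sg]

lemma wedge222_refl (M N P M' N' P' : Fin 6 → Fin 6 → ℝ)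
    (hM : ∀ i j, M' i j = sg i * sg j * M i j) (hN : ∀ i j, N' i j = sg i * sg j * N i j)
    (hP : ∀ i j, P' i j = sg i * sg j * P i j) :
    (1 / 8 : ℝ) * ∑ σ : Equiv.Perm (Fin 6), ((Equiv.Perm.sign σ : ℤ) : ℝ) *
      M' (σ 0) (σ 1) * N' (σ 2) (σ 3) * P' (σ 4) (σ 5) =
    - ((1 / 8 : ℝ) * ∑ σ : Equiv.Perm (Fin 6), ((Equiv.Perm.sign σ : ℤ) : ℝ) *
      M (σ 0) (σ 1) * N (σ 2) (σ 3) * P (σ 4) (σ 5)) := by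
  rw [← mul_neg, ← Finset.sum_neg_distrib]
  congr 1
  refine Finset.sum_congr rfl fun σ _ => ?_
  have h := Equiv.prod_comp σ sg
  rw [prod_sg, Fin.prod_univ_six] at h
  rw [hM, hN, hP]
  linear_combination (((Equiv.Perm.sign σ : ℤ) : ℝ) *
      M (σ 0) (σ 1) * N (σ 2) (σ 3) * P (σ 4) (σ 5)) * h

lemma hasFDerivAt_D {f : ℝ → E3} (hf : Differentiable ℝ f) (k : Fin 6) (x : E6) :
    HasFDerivAt (fun y : E6 => ptY y - f (y k))
      (ptL - (EuclideanSpace.proj k : E6 →L[ℝ] ℝ).smulRight (deriv f (x k))) x :=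
  (hasFDerivAt_ptY x).sub (hasFDerivAt_coord f hf k x)

lemma pdv_D {f : ℝ → E3} (hf : Differentiable ℝ f) (k i : Fin 6) (x : E6) :
    pdv (fun y : E6 => ptY y - f (y k)) i x =
      ptY (EuclideanSpace.single i 1) - (if k = i then deriv f (x k) else 0) := by
  unfold pdv
  rw [(hasFDerivAt_D hf k x).fderiv]
  simp [ite_smul, PiLp.single_apply, ptL_apply]

lemma rot_pt (i : Fin 6) : sg i • rot (ptY (EuclideanSpace.single i 1)) =
    ptY (EuclideanSpace.single i 1) := by
  fin_cases i <;> apply ext3 <;> simp [ptY, rot, sg]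

lemma refl_D {f : ℝ → E3} (hf : Differentiable ℝ f) {k : Fin 6} (hk : k ≠ 5) {a δ : ℝ}
    (hs : StrAt f a δ) {v x : E6} (hv : v k = 2 * a) (h3 : v 3 = 2 * f a 0) (h4 : v 4 = 2 * f a 1)
    (h5 : v 5 = 0) (hx : |x k - a| < δ) :
    ptY (PhiY v x) - f (PhiY v x k) = rot (ptY x - f (x k)) ∧
    ∀ i, pdv (fun y : E6 => ptY y - f (y k)) i (PhiY v x) =
      sg i • rot (pdv (fun y : E6 => ptY y - f (y k)) i x) := by
  obtain ⟨w, hw, hs⟩ := hs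
  have c : ∀ i, PhiY v x i = v i + sg i * x i := fun i => by
    unfold PhiY; rw [PiLp.add_apply, TY_apply]
  have sk : sg k = -1 := by simp [sg, hk]
  have hyk : PhiY v x k = 2 * a - x k := by rw [c, hv, sk]; ring
  have hy : |PhiY v x k - a| < δ := by
    rw [hyk, ← abs_neg]; convert hx using 2; ring
  constructor
  · rw [hs _ hy, hs _ hx, hyk]
    apply ext3
    · simp [ptY, rot, c, h3, sg]; ring
    · simp [ptY, rot, c, h4, sg]; ring
    · simp [ptY, rot, c, h5, sg, hw]
  · intro i
    rw [pdv_D hf, pdv_D hf, StrAt.deriv hs hy, StrAt.deriv hs hx]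
    have hr := rot_pt i
    by_cases hki : k = i
    · subst hki
      simp only [if_true]
      rw [sk] at hr ⊢
      have r2 := congrArg (fun u : E3 => u 2) hr
      simp [rot] at r2
      apply ext3
      · simp [rot]
      · simp [rot]
      · simp [rot, hw]; linarith
    · simp only [hki, if_false, sub_zero]
      exact hr.symm

lemma pdv_neg_D {D : E6 → E3} (i : Fin 6) (x : E6) :
    pdv (fun y => - D y) i x = - pdv D i x := by
  unfold pdv
  rw [fderiv_fun_neg]; rfl

lemma rot_neg (u : E3) : rot (-u) = - rot u := by
  apply ext3 <;> simp [rot]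

lemma omegaY_refl {f : ℝ → E3} (hf : Differentiable ℝ f) {ε : ℝ} {g : E3 → ℝ}
    (hg : IsEtaForm ε g) {a b c δ : ℝ} (ha : StrAt f a δ) (hb : StrAt f b δ) (hc : StrAt f c δ)
    (b0 : f b 0 = f a 0) (b1 : f b 1 = f a 1) (c0 : f c 0 = f a 0) (c1 : f c 1 = f a 1)
    {v x : E6} (v0 : v 0 = 2 * a) (v1 : v 1 = 2 * b) (v2 : v 2 = 2 * c)
    (v3 : v 3 = 2 * f a 0) (v4 : v 4 = 2 * f a 1) (v5 : v 5 = 0)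
    (xa : |x 0 - a| < δ) (xb : |x 1 - b| < δ) (xc : |x 2 - c| < δ)
    (n0 : ptY x ≠ f (x 0)) (n1 : ptY x ≠ f (x 1)) (n2 : ptY x ≠ f (x 2)) :
    omegaY f g (PhiY v x) = - omegaY f g x ∧ ptY (PhiY v x) ≠ f (PhiY v x 0) ∧
      ptY (PhiY v x) ≠ f (PhiY v x 1) ∧ ptY (PhiY v x) ≠ f (PhiY v x 2) := by
  obtain ⟨p0, q0⟩ := refl_D hf (k := 0) (by decide) ha v0 v3 v4 v5 xa
  obtain ⟨p1, q1⟩ := refl_D hf (k := 1) (by decide) hb v1 (by rw [v3, b0]) (by rw [v4, b1]) v5 xb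
  obtain ⟨p2, q2⟩ := refl_D hf (k := 2) (by decide) hc v2 (by rw [v3, c0]) (by rw [v4, c1]) v5 xc
  have nz : ∀ u : E3, u ≠ 0 → rot u ≠ 0 := fun u hu => by
    rw [← norm_ne_zero_iff, norm_rot]; exact norm_ne_zero_iff.mpr hu
  refine ⟨?_, ?_, ?_, ?_⟩
  · have e : (fun y : E6 => unitv (f (y 1) - ptY y)) = fun y => unitv (-(ptY y - f (y 1))) := by
      funext y; rw [neg_sub]
    unfold omegaY
    rw [e]
    unfold wedge222
    apply wedge222_refl
    · exact form2_refl hg (hasFDerivAt_D hf 0 x).differentiableAt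
        (hasFDerivAt_D hf 0 _).differentiableAt (sub_ne_zero.mpr n0) p0 q0
    · refine form2_refl (D := fun y => -(ptY y - f (y 1))) hg
        (hasFDerivAt_D hf 1 x).differentiableAt.neg
        (hasFDerivAt_D hf 1 _).differentiableAt.neg (neg_ne_zero.mpr (sub_ne_zero.mpr n1)) ?_ ?_
      · rw [p1, rot_neg]
      · intro i
        rw [pdv_neg_D, pdv_neg_D, q1, rot_neg, smul_neg]
    · exact form2_refl hg (hasFDerivAt_D hf 2 x).differentiableAt
        (hasFDerivAt_D hf 2 _).differentiableAt (sub_ne_zero.mpr n2) p2 q2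
  · rw [← sub_ne_zero, p0]; exact nz _ (sub_ne_zero.mpr n0)
  · rw [← sub_ne_zero, p1]; exact nz _ (sub_ne_zero.mpr n1)
  · rw [← sub_ne_zero, p2]; exact nz _ (sub_ne_zero.mpr n2)

lemma omegaY_cone {f : ℝ → E3} {ε : ℝ} {g : E3 → ℝ} (hg : IsEtaForm ε g) {x : E6}
    (hx : x ∈ CY f) (h : omegaY f g x ≠ 0) :
    Cone ε (ptY x - f (x 0)) ∧ Cone ε (f (x 1) - ptY x) ∧ Cone ε (ptY x - f (x 2)) := by
  obtain ⟨-, -, n0, n1, n2⟩ := hx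
  refine ⟨cone_of_g hg (sub_ne_zero.mpr n0) fun h0 => h ?_,
    cone_of_g hg (sub_ne_zero.mpr n1.symm) fun h0 => h ?_,
    cone_of_g hg (sub_ne_zero.mpr n2) fun h0 => h ?_⟩ <;>
  · unfold omegaY wedge222
    rw [Finset.sum_eq_zero, mul_zero]
    intro σ _
    simp [form2, h0]

/-- The quadruple of parameters attached to a configuration. -/
def mY (x : E6) : (ℝ × ℝ) × (ℝ × ℝ) := ((x 0, x 1), (x 2, x 1))

lemma mY_cont : Continuous mY := by unfold mY; fun_prop

lemma ptY_cont : Continuous ptY := ptL.continuous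

lemma CY_open {f : ℝ → E3} (hf : Continuous f) : IsOpen (CY f) := by
  have hc : ∀ i : Fin 6, Continuous fun x : E6 => f (x i) := fun i => hf.comp (by fun_prop)
  have hp := ptY_cont
  have o1 : IsOpen {x : E6 | x 0 < x 1} := isOpen_lt (by fun_prop) (by fun_prop)
  have o2 : IsOpen {x : E6 | x 1 < x 2} := isOpen_lt (by fun_prop) (by fun_prop)
  exact o1.inter (o2.inter
    ((isOpen_ne_fun hp (hc 0)).inter ((isOpen_ne_fun hp (hc 1)).inter (isOpen_ne_fun hp (hc 2)))))

lemma mem_ball_mY {x : E6} {k : (ℝ × ℝ) × (ℝ × ℝ)} {δ : ℝ} : mY x ∈ Metric.ball k δ ↔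
    (|x 0 - k.1.1| < δ ∧ |x 1 - k.1.2| < δ) ∧ (|x 2 - k.2.1| < δ ∧ |x 1 - k.2.2| < δ) := by
  simp [mY, Metric.mem_ball, Prod.dist_eq, Real.dist_eq]

lemma piece_Y {f : ℝ → E3} (hf : Differentiable ℝ f) {ε : ℝ} {g : E3 → ℝ}
    (hg : IsEtaForm ε g) {k : (ℝ × ℝ) × (ℝ × ℝ)} {δ : ℝ} (hk : k.2.2 = k.1.2)
    (ha : StrAt f k.1.1 δ) (hb : StrAt f k.1.2 δ) (hc : StrAt f k.2.1 δ)
    (b0 : f k.1.2 0 = f k.1.1 0) (b1 : f k.1.2 1 = f k.1.1 1)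
    (c0 : f k.2.1 0 = f k.1.1 0) (c1 : f k.2.1 1 = f k.1.1 1)
    (ho : Metric.ball k δ ⊆ {z | z.1.1 < z.1.2 ∧ z.2.2 < z.2.1}) :
    ∫ x in CY f ∩ mY ⁻¹' Metric.ball k δ, omegaY f g x = 0 := by
  set A := CY f ∩ mY ⁻¹' Metric.ball k δ with hA
  set v : E6 := WithLp.toLp 2 ![2 * k.1.1, 2 * k.1.2, 2 * k.2.1, 2 * f k.1.1 0, 2 * f k.1.1 1, 0]
    with hv
  have v0 : v 0 = 2 * k.1.1 := rfl
  have v1 : v 1 = 2 * k.1.2 := rfl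
  have v2 : v 2 = 2 * k.2.1 := rfl
  have v3 : v 3 = 2 * f k.1.1 0 := rfl
  have v4 : v 4 = 2 * f k.1.1 1 := rfl
  have v5 : v 5 = 0 := rfl
  have cc : ∀ x i, PhiY v x i = v i + sg i * x i := fun x i => by
    unfold PhiY; rw [PiLp.add_apply, TY_apply]
  have inv : ∀ x, PhiY v (PhiY v x) = x := fun x => by
    ext i
    rw [cc, cc]
    by_cases hi : i = 5
    · subst hi; rw [v5]; simp [sg]
    · simp [sg, hi]
  have key : ∀ x ∈ A, PhiY v x ∈ A ∧ omegaY f g (PhiY v x) = - omegaY f g x := by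
    rintro x ⟨⟨h1, h2, n0, n1, n2⟩, hm⟩
    have hm1 : mY x ∈ Metric.ball k δ := hm
    rw [mem_ball_mY] at hm1
    obtain ⟨⟨xa, xb⟩, xc, xd⟩ := hm1
    obtain ⟨e, m0, m1, m2⟩ := omegaY_refl hf hg ha hb hc b0 b1 c0 c1 v0 v1 v2 v3 v4 v5 xa xb xc
      n0 n1 n2
    have y0 : PhiY v x 0 = 2 * k.1.1 - x 0 := by rw [cc, v0]; simp [sg]; ring
    have y1 : PhiY v x 1 = 2 * k.1.2 - x 1 := by rw [cc, v1]; simp [sg]; ring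
    have y2 : PhiY v x 2 = 2 * k.2.1 - x 2 := by rw [cc, v2]; simp [sg]; ring
    have ab : ∀ s t : ℝ, |s - t| < δ → |2 * t - s - t| < δ := fun s t h => by
      rw [← abs_neg]; convert h using 2; ring
    have hb : mY (PhiY v x) ∈ Metric.ball k δ := by
      rw [mem_ball_mY, y0, y1, y2]
      refine ⟨⟨ab _ _ xa, ab _ _ xb⟩, ab _ _ xc, ?_⟩
      rw [hk]; exact ab _ _ xb
    have hord := ho hb
    exact ⟨⟨⟨hord.1, hord.2, m0, m1, m2⟩, hb⟩, e⟩
  have hpre : PhiY v ⁻¹' A = A := by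
    ext x
    constructor
    · intro h
      have := (key _ h).1
      rwa [inv] at this
    · exact fun h => (key x h).1
  have hmA : MeasurableSet A :=
    ((CY_open hf.continuous).inter (Metric.isOpen_ball.preimage mY_cont)).measurableSet
  have e1 := (PhiY_mp v).setIntegral_preimage_emb (PhiY_emb v) (omegaY f g) A
  rw [hpre, setIntegral_congr_fun hmA (fun x hx => (key x hx).2), integral_neg] at e1
  linarith

lemma IY_zero (f : ℝ → E3) (hf : IsLongKnot f) (hD : TransverseK f)
    (hS : StraightNearMultipleK f) :
    ∀ᶠ ε in 𝓝[>] (0 : ℝ), ∀ g, IsEtaForm ε g → IY f g = 0 := by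
  obtain ⟨δ, hδ, hdisj, -, hstr, hord⟩ := exists_delta f hf hD hS
  have hdf : Differentiable ℝ f := hf.1.differentiable (by simp)
  have hfin : {k | k ∈ Kset f ∧ k.2.2 = k.1.2}.Finite := (Kset_finite hf hD).subset fun k h => h.1
  set U : Set ((ℝ × ℝ) × (ℝ × ℝ)) := (⋃ k ∈ {k | k ∈ Kset f ∧ k.2.2 = k.1.2}, Metric.ball k δ) ∪
    {z | z.2.2 ≠ z.1.2} with hU
  have hUo : IsOpen U := (isOpen_biUnion fun k _ => Metric.isOpen_ball).union
    (isOpen_ne_fun (by fun_prop) (by fun_prop))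
  have hKU : Kset f ⊆ U := fun k hk => by
    by_cases h : k.2.2 = k.1.2
    · exact Or.inl (mem_biUnion (show k ∈ {k | k ∈ Kset f ∧ k.2.2 = k.1.2} from ⟨hk, h⟩)
        (Metric.mem_ball_self hδ))
    · exact Or.inr h
  filter_upwards [quad_near hf hD hUo hKU, Ioo_mem_nhdsGT (zero_lt_one' ℝ)] with ε h1 h2 g hg
  have hCo := CY_open hdf.continuous
  by_cases hIntg : IntegrableOn (omegaY f g) (CY f)
  swap
  · exact integral_undef hIntg
  have hsub : ∫ x in CY f, omegaY f g x =
      ∫ x in ⋃ k ∈ hfin.toFinset, CY f ∩ mY ⁻¹' Metric.ball k δ, omegaY f g x := by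
    apply setIntegral_eq_of_subset_of_forall_sdiff_eq_zero hCo.measurableSet
    · exact iUnion₂_subset fun k _ => inter_subset_left
    · rintro x ⟨hx, hn⟩
      by_contra hne
      apply hn
      obtain ⟨k0, k1, k2⟩ := omegaY_cone hg hx hne
      have ca := k1.add h2.2.le k0
      have cb := k1.add h2.2.le k2
      rw [sub_add_sub_cancel] at ca cb
      have hm : mY x ∈ U := by
        apply h1 (mY x) ⟨hx.1, hx.2.1, hx.1.le, le_refl _, hx.2.1.le⟩ ca cb
      rcases hm with hm | hm
      · obtain ⟨k, hk, hb⟩ := mem_iUnion₂.mp hm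
        exact mem_iUnion₂.mpr ⟨k, hfin.mem_toFinset.mpr hk, hx, hb⟩
      · exact absurd rfl hm
  unfold IY
  rw [hsub, integral_biUnion_finset]
  · refine Finset.sum_eq_zero fun k hk => ?_
    obtain ⟨hkK, hke⟩ := hfin.mem_toFinset.mp hk
    have hns : k ∉ SX := fun h => absurd h.2.1 (by rw [hke]; exact lt_irrefl _)
    obtain ⟨ha, hb, hc, -⟩ := hstr k hkK hns
    have e1 := hkK.1.2.1
    have e2 := hkK.2.1.2.1
    have g0 := congrArg (fun u : ℝ × ℝ => u.1) e1
    have g1 := congrArg (fun u : ℝ × ℝ => u.2) e1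
    have g2 := congrArg (fun u : ℝ × ℝ => u.1) e2
    have g3 := congrArg (fun u : ℝ × ℝ => u.2) e2
    simp [pr12, hke] at g0 g1 g2 g3
    exact piece_Y hdf hg hke ha hb hc g0.symm g1.symm (g2.trans g0.symm) (g3.trans g1.symm)
      (hord k hkK)
  · exact fun k _ => (hCo.inter (Metric.isOpen_ball.preimage mY_cont)).measurableSet
  · intro k hk l hl hne
    have hk1 := (hfin.mem_toFinset.mp hk).1
    have hl1 := (hfin.mem_toFinset.mp hl).1
    exact ((hdisj hk1 hl1 hne).preimage mY).mono inter_subset_right inter_subset_right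
  · exact fun k _ => hIntg.mono_set inter_subset_left

lemma final_lemma (f : ℝ → E3) (hf : IsLongKnot f) (hD : TransverseK f)
    (hS : StraightNearMultipleK f) :
    ∃ ε₀ > (0 : ℝ), ∀ ε : ℝ, 0 < ε → ε < ε₀ → ∀ g : E3 → ℝ, IsEtaForm ε g →
      IX f g = pairXK f + (1 / 2) * (pairX1K f + pairX2K f + pairX3K f) ∧ IY f g = 0 := by
  have h := (IX_sum f hf hD hS).and (IY_zero f hf hD hS)
  obtain ⟨u, hu, hs⟩ := mem_nhdsGT_iff_exists_Ioo_subset.mp h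
  refine ⟨u, hu, fun ε h0 h1 g hg => ?_⟩
  have := hs ⟨h0, h1⟩
  exact ⟨(this.1 g hg).trans (sum_eq f hf hD), this.2 g hg⟩

/-- localization of the knot integrals for diagrams with multiple
crossings. Let `f` be a long knot with an arbitrary transverse diagram (triple and
higher crossings allowed), whose subarcs near each multiple crossing are straight
segments parallel to the plane `N^⊥`. Then for all sufficiently small `ε > 0`,
`I_X(f) = ⟨X, G_D⟩ + (1/2)(⟨X′₁, G_D⟩ + ⟨X′₂, G_D⟩ + ⟨X′₃, G_D⟩)` and `I_Y(f) = 0`. -/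
theorem statement17 (f : ℝ → E3) (hf : IsLongKnot f) (hD : TransverseK f)
    (hS : StraightNearMultipleK f) :
    ∃ ε₀ > (0 : ℝ), ∀ ε : ℝ, 0 < ε → ε < ε₀ → ∀ g : E3 → ℝ, IsEtaForm ε g →
      IX f g = pairXK f + (1 / 2) * (pairX1K f + pairX2K f + pairX3K f) ∧
      IY f g = 0 := by
  exact final_lemma f hf hD hS
end
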